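/- arXiv:1809.04784 — 10 statements merged into one kernel-verified Lean document; each statement's English description precedes it below -/
import Mathlib

section
/- Let M be a smooth manifold, h a non-degenerate (0,2)-tensor field on M, and ∇ an affine connection on M. Then the structures Ĵ_c and Ĵ_p on TM ⊕ T*M are ∇-integrable if and only if (M, h, ∇) is a quasi-statistical manifold. -/
/-!
Since `h` is non-degenerate, every section of `TM ⊕ T*M` has the form `X + h(X')`. On such
sections both Nijenhuis tensors are combinations of the single 2-form `T = defect`, valued in
one-forms, which is `−d^∇ h` (`dnabla_eq`): the tangent component is
`h⁻¹(T(X',Y') ∓ T(X,Y))` and the cotangent component is `±(T(X',Y) + T(X,Y'))`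
(`nijenhuis_Jc`, `nijenhuis_Jp`). Both vanish when `T = 0`. Conversely, evaluating either
tensor on vector fields (`X' = Y' = 0`) recovers `h⁻¹(T(X,Y))` up to sign, so one of the two
integrability conditions already forces `T = 0`.
-/

namespace GQS

variable (A : Type*) [CommRing A] [Algebra ℝ A]

/-- Vector fields on the "manifold" with smooth functions `A`. -/
abbrev Vec := Derivation ℝ A A
/-- One-forms. -/
abbrev Form := Vec A →ₗ[A] A
/-- Sections of the generalized tangent bundle `TM ⊕ T*M`. -/
abbrev Gen := Vec A × Form A

variable {A}

/-- An affine connection on vector fields. -/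
structure Conn (A : Type*) [CommRing A] [Algebra ℝ A] where
  smul : Vec A → Vec A → Vec A
  map_add_left : ∀ X Y Z, smul (X + Y) Z = smul X Z + smul Y Z
  map_smul_left : ∀ (f : A) (X Y), smul (f • X) Y = f • smul X Y
  map_add_right : ∀ X Y Z, smul X (Y + Z) = smul X Y + smul X Z
  leibniz : ∀ (X : Vec A) (f : A) (Y), smul X (f • Y) = X f • Y + f • smul X Y

/-- The induced connection on one-forms: `(∇_X α)(Y) = X(α Y) − α(∇_X Y)`. -/
def Conn.coSmul (D : Conn A) (X : Vec A) (α : Form A) : Form A where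
  toFun Y := X (α Y) - α (D.smul X Y)
  map_add' Y Z := by
    simp only [map_add, D.map_add_right]; ring
  map_smul' f Y := by
    simp only [map_smul, smul_eq_mul, Derivation.leibniz, D.leibniz, map_add,
      RingHom.id_apply]
    ring

/-- The torsion of a connection. -/
def Conn.torsion (D : Conn A) (X Y : Vec A) : Vec A := D.smul X Y - D.smul Y X - ⁅X, Y⁆

/-- The curvature operator of a connection, on vector fields. -/
def Conn.curv (D : Conn A) (X Y Z : Vec A) : Vec A :=
  D.smul X (D.smul Y Z) - D.smul Y (D.smul X Z) - D.smul ⁅X, Y⁆ Z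

/-- The curvature operator of the induced connection on one-forms. -/
def Conn.coCurv (D : Conn A) (X Y : Vec A) (γ : Form A) : Form A :=
  D.coSmul X (D.coSmul Y γ) - D.coSmul Y (D.coSmul X γ) - D.coSmul ⁅X, Y⁆ γ


/-- Symmetric `(0,2)`-tensor (encoded through its musical isomorphism `φ = ♭_h`). -/
def Symm (φ : Vec A ≃ₗ[A] Form A) : Prop := ∀ X Y, φ X Y = φ Y X

/-- Skew-symmetric `(0,2)`-tensor. -/
def Skew (φ : Vec A ≃ₗ[A] Form A) : Prop := ∀ X Y, φ X Y = - φ Y X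

/-- `(∇_X h)(Y,Z)` for the tensor `h(X,Y) = φ X Y`. -/
def covh (D : Conn A) (φ : Vec A ≃ₗ[A] Form A) (X Y Z : Vec A) : A :=
  X (φ Y Z) - φ (D.smul X Y) Z - φ Y (D.smul X Z)

/-- `(d^∇ h)(X,Y,Z)`. -/
def dnabla (D : Conn A) (φ : Vec A ≃ₗ[A] Form A) (X Y Z : Vec A) : A :=
  covh D φ X Y Z - covh D φ Y X Z + φ (D.torsion X Y) Z

/-- `(M,h,∇)` is a quasi-statistical manifold: `d^∇ h = 0`. -/
def QuasiStat (D : Conn A) (φ : Vec A ≃ₗ[A] Form A) : Prop :=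
  ∀ X Y Z, dnabla D φ X Y Z = 0

/-- The bracket `[X+α, Y+β]_∇ = [X,Y] + ∇_X β − ∇_Y α` on `TM ⊕ T*M`. -/
def gbracket (D : Conn A) (σ τ : Gen A) : Gen A :=
  (⁅σ.1, τ.1⁆, D.coSmul σ.1 τ.2 - D.coSmul τ.1 σ.2)

/-- The generalized complex structure `Ĵ_c(X+α) = −h⁻¹(α) + h(X)`. -/
def Jc (φ : Vec A ≃ₗ[A] Form A) (σ : Gen A) : Gen A := (-(φ.symm σ.2), φ σ.1)

/-- The generalized product structure `Ĵ_p(X+α) = h⁻¹(α) + h(X)`. -/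
def Jp (φ : Vec A ≃ₗ[A] Form A) (σ : Gen A) : Gen A := (φ.symm σ.2, φ σ.1)

/-- The natural indefinite metric `⟨X+α, Y+β⟩ = −(1/2)(α(Y)+β(X))`. -/
noncomputable def pairInd (σ τ : Gen A) : A := -((2⁻¹ : ℝ) • (σ.2 τ.1 + τ.2 σ.1))

/-- The natural symplectic structure `(X+α, Y+β) = −(1/2)(α(Y)−β(X))`. -/
noncomputable def pairSymp (σ τ : Gen A) : A := -((2⁻¹ : ℝ) • (σ.2 τ.1 - τ.2 σ.1))

/-- The bilinear form `ȟ(X+α, Y+β) = h(X,Y) + h(h⁻¹α, h⁻¹β)`. -/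
def hcheck (φ : Vec A ≃ₗ[A] Form A) (σ τ : Gen A) : A :=
  φ σ.1 τ.1 + φ (φ.symm σ.2) (φ.symm τ.2)

/-- The Nijenhuis tensor of `J` with respect to `∇`. -/
def nijenhuis (D : Conn A) (J : Gen A → Gen A) (σ τ : Gen A) : Gen A :=
  gbracket D (J σ) (J τ) - J (gbracket D (J σ) τ) - J (gbracket D σ (J τ))
    + J (J (gbracket D σ τ))

/-- The connection `∇̂_{X+α}(Y+β) = ∇_X Y + h(∇_X h⁻¹(β))` on `TM ⊕ T*M`. -/
def hatConn (D : Conn A) (φ : Vec A ≃ₗ[A] Form A) (σ τ : Gen A) : Gen A :=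
  (D.smul σ.1 τ.1, φ (D.smul σ.1 (φ.symm τ.2)))

/-- The connection `∇̌_{X+α}(Y+β) = ∇_X Y + ∇_X β` on `TM ⊕ T*M`. -/
def checkConn (D : Conn A) (σ τ : Gen A) : Gen A :=
  (D.smul σ.1 τ.1, D.coSmul σ.1 τ.2)

/-- The generalized dual quasi-statistical connection
`∇̂*_{X+α}(Z+γ) = h⁻¹(∇_X h(Z)) + ∇_X γ`. -/
def dualConn (D : Conn A) (φ : Vec A ≃ₗ[A] Form A) (σ τ : Gen A) : Gen A :=
  (φ.symm (D.coSmul σ.1 (φ τ.1)), D.coSmul σ.1 τ.2)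

/-- Torsion of a connection `E` on `TM ⊕ T*M` (with respect to the bracket `[·,·]_∇`). -/
def gtorsion (D : Conn A) (E : Gen A → Gen A → Gen A) (σ τ : Gen A) : Gen A :=
  E σ τ - E τ σ - gbracket D σ τ

/-- `(D_σ ĥ)(τ,ν)` for a bilinear form `ĥ` on `TM ⊕ T*M`, with `(X+α)(f) = X(f)`. -/
def gcov (E : Gen A → Gen A → Gen A) (hh : Gen A → Gen A → A) (σ τ ν : Gen A) : A :=
  σ.1 (hh τ ν) - hh (E σ τ) ν - hh τ (E σ ν)

/-- `(d^D ĥ)(σ,τ,ν)`. -/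
def gdiff (D : Conn A) (E : Gen A → Gen A → Gen A) (hh : Gen A → Gen A → A)
    (σ τ ν : Gen A) : A :=
  gcov E hh σ τ ν - gcov E hh τ σ ν + hh (gtorsion D E σ τ) ν

/-- `(ĥ, D)` is a generalized quasi-statistical structure: `d^D ĥ = 0`. -/
def GenQuasiStat (D : Conn A) (E : Gen A → Gen A → Gen A) (hh : Gen A → Gen A → A) : Prop :=
  ∀ σ τ ν, gdiff D E hh σ τ ν = 0

/-- The curvature operator of a connection `E` on `TM ⊕ T*M`. -/
def gcurv (D : Conn A) (E : Gen A → Gen A → Gen A) (σ τ ν : Gen A) : Gen A :=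
  E σ (E τ ν) - E τ (E σ ν) - E (gbracket D σ τ) ν


/-- The defect `T(X,Y) = h[X,Y] − ∇_X h(Y) + ∇_Y h(X)`, i.e. the negative of `d^∇ h`
contracted with `X, Y`. -/
def defect (D : Conn A) (φ : Vec A ≃ₗ[A] Form A) (X Y : Vec A) : Form A :=
  φ ⁅X, Y⁆ - D.coSmul X (φ Y) + D.coSmul Y (φ X)

lemma coSmul_apply (D : Conn A) (X : Vec A) (α : Form A) (Y : Vec A) :
    D.coSmul X α Y = X (α Y) - α (D.smul X Y) := rfl

lemma smul_neg_left (D : Conn A) (X Y : Vec A) : D.smul (-X) Y = -D.smul X Y := by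
  simpa using D.map_smul_left (-1) X Y

lemma coSmul_neg_left (D : Conn A) (X : Vec A) (α : Form A) :
    D.coSmul (-X) α = -D.coSmul X α := by
  ext Y
  simp only [coSmul_apply, smul_neg_left, map_neg, LinearMap.neg_apply, Derivation.neg_apply]
  ring

/-- The two derivatives of the first argument of `h` in `d^∇ h` cancel against the torsion. -/
lemma dnabla_eq (D : Conn A) (φ : Vec A ≃ₗ[A] Form A) (X Y Z : Vec A) :
    dnabla D φ X Y Z = -defect D φ X Y Z := by
  simp only [dnabla, covh, defect, Conn.torsion, coSmul_apply, map_sub, LinearMap.sub_apply,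
    LinearMap.add_apply]
  ring

lemma quasiStat_iff (D : Conn A) (φ : Vec A ≃ₗ[A] Form A) :
    QuasiStat D φ ↔ ∀ X Y, defect D φ X Y = 0 := by
  simp only [QuasiStat, dnabla_eq, neg_eq_zero, LinearMap.ext_iff, LinearMap.zero_apply]

lemma nijenhuis_Jc (D : Conn A) (φ : Vec A ≃ₗ[A] Form A) (X X' Y Y' : Vec A) :
    nijenhuis D (Jc φ) (X, φ X') (Y, φ Y') =
      (φ.symm (defect D φ X' Y' - defect D φ X Y),
        defect D φ X' Y + defect D φ X Y') := by
  simp only [nijenhuis, gbracket, Jc, defect, LinearEquiv.symm_apply_apply, coSmul_neg_left,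
    map_neg, map_sub, map_add, neg_lie, lie_neg, neg_neg, Prod.mk_sub_mk, Prod.mk_add_mk,
    LinearEquiv.apply_symm_apply]
  refine Prod.ext ?_ ?_ <;> dsimp only <;> abel

lemma nijenhuis_Jp (D : Conn A) (φ : Vec A ≃ₗ[A] Form A) (X X' Y Y' : Vec A) :
    nijenhuis D (Jp φ) (X, φ X') (Y, φ Y') =
      (φ.symm (defect D φ X' Y' + defect D φ X Y),
        -(defect D φ X' Y + defect D φ X Y')) := by
  simp only [nijenhuis, gbracket, Jp, defect, LinearEquiv.symm_apply_apply,
    map_sub, map_add, Prod.mk_sub_mk, Prod.mk_add_mk, LinearEquiv.apply_symm_apply]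
  refine Prod.ext ?_ ?_ <;> dsimp only <;> abel

lemma defect_zero (D : Conn A) (φ : Vec A ≃ₗ[A] Form A) : defect D φ 0 0 = 0 := by
  simp [defect]

/-- `Ĵ_c` and `Ĵ_p` are `∇`-integrable iff `(M,h,∇)` is quasi-statistical. -/
theorem statement1 (φ : Vec A ≃ₗ[A] Form A) (D : Conn A) :
    ((∀ σ τ : Gen A, nijenhuis D (Jc φ) σ τ = 0) ∧
      (∀ σ τ : Gen A, nijenhuis D (Jp φ) σ τ = 0)) ↔ QuasiStat D φ := by
  rw [quasiStat_iff]
  constructor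
  · rintro ⟨-, hp⟩ X Y
    have h := congrArg Prod.fst (hp (X, φ 0) (Y, φ 0))
    rw [nijenhuis_Jp, defect_zero, zero_add] at h
    exact φ.symm.map_eq_zero_iff.mp h
  · intro hT
    constructor <;> rintro ⟨X, α⟩ ⟨Y, β⟩ <;>
      obtain ⟨X', rfl⟩ := φ.surjective α <;> obtain ⟨Y', rfl⟩ := φ.surjective β
    · simp [nijenhuis_Jc, hT]
    · simp [nijenhuis_Jp, hT]

end GQS
end

section
/- Let M be a smooth manifold, h a non-degenerate symmetric (respectively skew-symmetric) (0,2)-tensor field on M, and ∇ an affine connection on M. Let ĥ be the natural indefinite metric ⟨·,·⟩ (respectively the natural symplectic structure (·,·)) on TM ⊕ T*M, and let ∇̂ be the connection ∇̂_{X+α}(Y+β) := ∇_X Y + h(∇_X h⁻¹(β)). Then (TM ⊕ T*M, ĥ, ∇̂) is a generalized quasi-statistical manifold if and only if (M, h, ∇) is a quasi-statistical manifold. -/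
/-!
Writing `σ = X + α`, `τ = Y + β`, `ν = Z + γ`, the torsion terms of `d^∇̂ ĥ` absorb the terms
`ĥ(∇̂_σ τ, ν)` and `ĥ(∇̂_τ σ, ν)`, so that
`(d^∇̂ ĥ)(σ,τ,ν) = X ĥ(τ,ν) − ĥ(τ,∇̂_σ ν) − Y ĥ(σ,ν) + ĥ(σ,∇̂_τ ν) − ĥ([σ,τ]_∇,ν)`.
By the definition of `∇` on one-forms all terms in `α` and `β` cancel, and the (skew-)symmetry
of `h` turns what is left into `−(1/2) (d^∇ h)(X, Y, h⁻¹ γ)`. Both directions follow, since `h⁻¹`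
is surjective and `1/2` is invertible.
-/


namespace GQS

variable (A : Type*) [CommRing A] [Algebra ℝ A]

variable {A}

lemma gdiff_hatConn_pairInd (φ : Vec A ≃ₗ[A] Form A) (D : Conn A) (h : Symm φ)
    (σ τ ν : Gen A) :
    gdiff D (hatConn D φ) pairInd σ τ ν
      = -((2⁻¹ : ℝ) • dnabla D φ σ.1 τ.1 (φ.symm ν.2)) := by
  obtain ⟨X, α⟩ := σ
  obtain ⟨Y, β⟩ := τ
  obtain ⟨Z, γ⟩ := ν
  obtain ⟨W, rfl⟩ := φ.surjective γ
  simp only [gdiff, gcov, pairInd, hatConn, gtorsion, gbracket, dnabla, covh, Conn.torsion,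
    Conn.coSmul, LinearEquiv.symm_apply_apply, Prod.fst_sub, Prod.snd_sub, map_sub, map_neg,
    map_add, Derivation.map_smul, LinearMap.sub_apply, LinearMap.coe_mk, AddHom.coe_mk]
  -- Symmetry moves `W` and its derivatives into the second slot.
  rw [h W Y, h W X, h (D.smul X W) Y, h (D.smul Y W) X, h W (D.smul X Y),
    h W (D.smul Y X), h W ⁅X, Y⁆]
  module

lemma gdiff_hatConn_pairSymp (φ : Vec A ≃ₗ[A] Form A) (D : Conn A) (h : Skew φ)
    (σ τ ν : Gen A) :
    gdiff D (hatConn D φ) pairSymp σ τ ν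
      = -((2⁻¹ : ℝ) • dnabla D φ σ.1 τ.1 (φ.symm ν.2)) := by
  obtain ⟨X, α⟩ := σ
  obtain ⟨Y, β⟩ := τ
  obtain ⟨Z, γ⟩ := ν
  obtain ⟨W, rfl⟩ := φ.surjective γ
  simp only [gdiff, gcov, pairSymp, hatConn, gtorsion, gbracket, dnabla, covh, Conn.torsion,
    Conn.coSmul, LinearEquiv.symm_apply_apply, Prod.fst_sub, Prod.snd_sub, map_sub, map_neg,
    map_add, Derivation.map_smul, LinearMap.sub_apply, LinearMap.coe_mk, AddHom.coe_mk]
  -- Skew-symmetry moves `W` and its derivatives into the second slot.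
  rw [h W Y, h W X, h (D.smul X W) Y, h (D.smul Y W) X, h W (D.smul X Y),
    h W (D.smul Y X), h W ⁅X, Y⁆]
  simp only [map_neg]
  module

/-- A bilinear form whose `d^∇̂` is `−(1/2) (d^∇ h)(·, ·, h⁻¹ ·)` is generalized
quasi-statistical exactly when `h` is quasi-statistical. -/
lemma genQuasiStat_iff_of_gdiff (φ : Vec A ≃ₗ[A] Form A) (D : Conn A) (hh : Gen A → Gen A → A)
    (key : ∀ σ τ ν : Gen A, gdiff D (hatConn D φ) hh σ τ ν
      = -((2⁻¹ : ℝ) • dnabla D φ σ.1 τ.1 (φ.symm ν.2))) :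
    GenQuasiStat D (hatConn D φ) hh ↔ QuasiStat D φ := by
  constructor
  · intro H X Y W
    have e := H (X, 0) (Y, 0) (0, φ W)
    rw [key, neg_eq_zero] at e
    simpa using e
  · intro H σ τ ν
    rw [key, H, smul_zero, neg_zero]

/-- `(TM ⊕ T*M, ĥ, ∇̂)` is a generalized quasi-statistical manifold iff
`(M,h,∇)` is quasi-statistical, where `ĥ = ⟨·,·⟩` if `h` is symmetric and `ĥ = (·,·)`
if `h` is skew-symmetric. -/
theorem statement2 (φ : Vec A ≃ₗ[A] Form A) (D : Conn A) :
    (Symm φ → (GenQuasiStat D (hatConn D φ) pairInd ↔ QuasiStat D φ)) ∧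
    (Skew φ → (GenQuasiStat D (hatConn D φ) pairSymp ↔ QuasiStat D φ)) := by
  exact ⟨fun h => genQuasiStat_iff_of_gdiff φ D _ (gdiff_hatConn_pairInd φ D h),
    fun h => genQuasiStat_iff_of_gdiff φ D _ (gdiff_hatConn_pairSymp φ D h)⟩

end GQS
end

section
/- Let (M, h, ∇) be a quasi-statistical manifold and let ∇̂* be the generalized dual quasi-statistical connection on TM ⊕ T*M, given by ∇̂*_{X+α}(Z+γ) = h⁻¹(∇_X h(Z)) + ∇_X γ. Then ∇̂* is torsion-free, i.e. T^{∇̂*}(σ, τ) := ∇̂*_σ τ − ∇̂*_τ σ − [σ, τ]_∇ = 0 for all sections σ, τ of TM ⊕ T*M. -/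
/-!
The one-form part of the torsion vanishes by definition of the bracket `[·,·]_∇`. For the vector
part, applying `h` reduces the claim to `∇_X h(Y) − ∇_Y h(X) = h([X, Y])`, which is the condition
`d^∇ h = 0` rewritten through the induced connection on one-forms (`coSmul_flat_sub`).
-/

namespace GQS

variable (A : Type*) [CommRing A] [Algebra ℝ A]

variable {A}

/-- The condition `d^∇ h = 0` is the exchange law `∇_X h(Y) − ∇_Y h(X) = h([X, Y])` for the induced
connection on one-forms: the terms `h(∇_X Y, ·)` and `h(∇_Y X, ·)` of the covariant derivatives of
`h` cancel against the torsion. -/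
theorem coSmul_flat_sub (φ : Vec A ≃ₗ[A] Form A) (D : Conn A) (hqs : QuasiStat D φ)
    (X Y : Vec A) : D.coSmul X (φ Y) - D.coSmul Y (φ X) = φ ⁅X, Y⁆ := by
  refine LinearMap.ext fun Z => ?_
  have h := hqs X Y Z
  simp only [dnabla, covh, Conn.torsion, map_sub, LinearMap.sub_apply] at h
  change (X (φ Y Z) - φ Y (D.smul X Z)) - (Y (φ X Z) - φ X (D.smul Y Z)) = φ ⁅X, Y⁆ Z
  linear_combination h

/-- on a quasi-statistical manifold, the generalized dual quasi-statistical
connection `∇̂*` is torsion-free. -/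
theorem statement4 (φ : Vec A ≃ₗ[A] Form A) (D : Conn A) (hqs : QuasiStat D φ) :
    ∀ σ τ : Gen A, gtorsion D (dualConn D φ) σ τ = 0 := by
  intro σ τ
  ext1
  · change φ.symm (D.coSmul σ.1 (φ τ.1)) - φ.symm (D.coSmul τ.1 (φ σ.1)) - ⁅σ.1, τ.1⁆ = 0
    rw [← map_sub, coSmul_flat_sub φ D hqs, LinearEquiv.symm_apply_apply, sub_self]
  -- the one-form parts of `∇̂*` and of the bracket are built from the same connection
  · exact sub_self (D.coSmul σ.1 τ.2 - D.coSmul τ.1 σ.2)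

end GQS
end

section
/- Let M be a smooth manifold, h a non-degenerate symmetric or skew-symmetric (0,2)-tensor field on M, ∇ an affine connection on M, ȟ the bilinear form ȟ(X+α, Y+β) := h(X,Y) + h(h⁻¹(α), h⁻¹(β)) on TM ⊕ T*M, and ∇̂ the connection ∇̂_{X+α}(Y+β) := ∇_X Y + h(∇_X h⁻¹(β)). Then (TM ⊕ T*M, ȟ, ∇̂) is a generalized quasi-statistical manifold if and only if (M, h, ∇) is a quasi-statistical manifold. -/
/-!
The exterior covariant differential of `ȟ` is the pullback of that of `h`:
`(d^∇̂ ȟ)(X + α, Y + β, Z + γ) = (d^∇ h)(X, Y, Z)` (`gdiff_hatConn_hcheck`).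

Indeed `ȟ` and `∇̂` are both block diagonal, and the vector blocks contribute `(d^∇ h)(X, Y, Z)`.
For the form blocks put `U = h⁻¹ α`, `V = h⁻¹ β`, `W = h⁻¹ γ`. The covariant derivatives of `ȟ`
contribute `(∇_X h)(V, W) - (∇_Y h)(U, W)`. The form component of the torsion is
`(h(∇_X V) - ∇_X (h V)) - (h(∇_Y U) - ∇_Y (h U))`, and by the Leibniz rule
`(∇_X (h V) - h(∇_X V))(W) = (∇_X h)(V, W)` (`coSmul_sub_eq_covh`), so these terms cancel.
The equivalence follows; for the forward implication take `α = β = γ = 0`.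
-/

namespace GQS

variable (A : Type*) [CommRing A] [Algebra ℝ A]

variable {A}

/-- `∇_X h` measures the failure of the musical isomorphism to commute with `∇_X`. -/
theorem coSmul_sub_eq_covh (D : Conn A) (φ : Vec A ≃ₗ[A] Form A) (X V W : Vec A) :
    D.coSmul X (φ V) W - φ (D.smul X V) W = covh D φ X V W := by
  simp only [Conn.coSmul, covh, LinearMap.coe_mk, AddHom.coe_mk]
  ring

theorem gdiff_hatConn_hcheck (D : Conn A) (φ : Vec A ≃ₗ[A] Form A) (σ τ ν : Gen A) :
    gdiff D (hatConn D φ) (hcheck φ) σ τ ν = dnabla D φ σ.1 τ.1 ν.1 := by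
  obtain ⟨X, α⟩ := σ
  obtain ⟨Y, β⟩ := τ
  obtain ⟨Z, γ⟩ := ν
  obtain ⟨U, rfl⟩ := φ.surjective α
  obtain ⟨V, rfl⟩ := φ.surjective β
  obtain ⟨W, rfl⟩ := φ.surjective γ
  have hX := coSmul_sub_eq_covh D φ X V W
  have hY := coSmul_sub_eq_covh D φ Y U W
  simp only [covh] at hX hY
  simp only [gdiff, gcov, hcheck, gtorsion, hatConn, gbracket, dnabla, covh, Conn.torsion,
    LinearEquiv.symm_apply_apply, LinearEquiv.apply_symm_apply, Prod.fst_sub, Prod.snd_sub,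
    map_add, map_sub, LinearMap.sub_apply]
  linear_combination hY - hX

/-- `(TM ⊕ T*M, ȟ, ∇̂)` is a generalized quasi-statistical manifold iff
`(M,h,∇)` is quasi-statistical (`h` symmetric or skew-symmetric). -/
theorem statement5 (φ : Vec A ≃ₗ[A] Form A) (D : Conn A) (hs : Symm φ ∨ Skew φ) :
    GenQuasiStat D (hatConn D φ) (hcheck φ) ↔ QuasiStat D φ := by
  simp only [GenQuasiStat, gdiff_hatConn_hcheck]
  exact ⟨fun h X Y Z => h (X, 0) (Y, 0) (Z, 0), fun h σ τ ν => h σ.1 τ.1 ν.1⟩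

end GQS
end

section
/- Let (M, h, ∇) be a quasi-statistical manifold with h symmetric or skew-symmetric, and let (ȟ, ∇̂) be the induced generalized quasi-statistical structure on TM ⊕ T*M, where ȟ(X+α, Y+β) := h(X,Y) + h(h⁻¹(α), h⁻¹(β)) and ∇̂_{X+α}(Y+β) := ∇_X Y + h(∇_X h⁻¹(β)). Then the generalized dual quasi-statistical connection (∇̂*)_ȟ, defined by ȟ(Y+β, ((∇̂*)_ȟ)_{X+α}(Z+γ)) = X(ȟ(Y+β, Z+γ)) − ȟ(∇̂_{X+α}(Y+β), Z+γ), is given by ((∇̂*)_ȟ)_{X+α}(Z+γ) = h⁻¹(∇_X h(Z)) + ∇_X γ; in particular it coincides with the dual connection ∇̂* of ∇̂ with respect to the natural pairing ĥ. -/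
/-!
The duality equation splits along `TM ⊕ T*M`. On the tangent summand, (skew-)symmetry of `h` turns
`h(Y, h⁻¹(∇_X h(Z)))` into `±(∇_X h(Z))(Y) = ±(X(h(Z, Y)) - h(Z, ∇_X Y))`, and a second use of
(skew-)symmetry gives `X(h(Y, Z)) - h(∇_X Y, Z)`; this is `flat_symm_coSmul`. The cotangent summand
is the same identity at the vector fields `h⁻¹(β)` and `h⁻¹(γ)`.
-/

namespace GQS

variable (A : Type*) [CommRing A] [Algebra ℝ A]

variable {A}

/-- On vector fields, `Z ↦ h⁻¹(∇_X h(Z))` is the `h`-dual connection of `∇`. -/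
theorem flat_symm_coSmul (φ : Vec A ≃ₗ[A] Form A) (D : Conn A) (hs : Symm φ ∨ Skew φ)
    (X Y Z : Vec A) :
    φ Y (φ.symm (D.coSmul X (φ Z))) = X (φ Y Z) - φ (D.smul X Y) Z := by
  rcases hs with h | h
  · rw [h Y, LinearEquiv.apply_symm_apply, h Y Z, h (D.smul X Y) Z]
    rfl
  · rw [h Y, LinearEquiv.apply_symm_apply, h Y Z, h (D.smul X Y) Z, map_neg]
    change -(X (φ Z Y) - φ Z (D.smul X Y)) = _
    ring

/-- the generalized dual quasi-statistical connection of `∇̂` with respect to `ȟ`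
is given by `h⁻¹(∇_X h(Z)) + ∇_X γ`, i.e. `dualConn` (which is the dual connection `∇̂*` with
respect to the natural pairing) satisfies the `ȟ`-duality equation; in particular the two dual
connections coincide. -/
theorem statement6 (φ : Vec A ≃ₗ[A] Form A) (D : Conn A) (hs : Symm φ ∨ Skew φ)
    (hqs : QuasiStat D φ) :
    ∀ σ τ ν : Gen A,
      hcheck φ τ (dualConn D φ σ ν) = σ.1 (hcheck φ τ ν) - hcheck φ (hatConn D φ σ τ) ν := by
  intro σ τ ν
  have h₁ := flat_symm_coSmul φ D hs σ.1 τ.1 ν.1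
  have h₂ := flat_symm_coSmul φ D hs σ.1 (φ.symm τ.2) (φ.symm ν.2)
  rw [LinearEquiv.apply_symm_apply φ ν.2] at h₂
  simp only [hcheck, dualConn, hatConn, LinearEquiv.symm_apply_apply, map_add]
  rw [h₁, h₂]
  ring

end GQS
end

section
/- Let (M, h, ∇) be a quasi-statistical manifold and let ∇̂_{X+α}(Y+β) := ∇_X Y + h(∇_X h⁻¹(β)) and ∇̂*_{X+α}(Z+γ) := h⁻¹(∇_X h(Z)) + ∇_X γ be the induced connection and its generalized dual on TM ⊕ T*M. Then the curvature operators satisfy R^{∇̂}(X+α, Y+β)(Z+γ) = R^∇(X,Y)Z + h(R^∇(X,Y) h⁻¹(γ)) and R^{∇̂*}(X+α, Y+β)(Z+γ) = h⁻¹(R^∇(X,Y) h(Z)) + R^∇(X,Y)γ, where R^∇ acts on one-forms as the curvature of the induced connection on T*M. In particular, ∇̂ and ∇̂* are flat if and only if ∇ is flat. -/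
/-!
In both connections the vector and covector parts do not interact, and `h⁻¹ ∘ h = id` cancels in
compositions: `∇̂` is `∇` on vector fields together with the transport of `∇` along `h` on one-forms,
and `∇̂*` is the induced connection on one-forms together with its transport along `h⁻¹`. Since the
bracket `[·,·]_∇` projects to the Lie bracket of vector fields, the curvatures are the transported
ones. Flatness of the induced connection on one-forms follows from that of `∇` because its
curvature is minus the transpose of `R^∇` (`coCurv_apply`).
-/

namespace GQS

variable (A : Type*) [CommRing A] [Algebra ℝ A]

variable {A}

/-- The curvature of the induced connection on one-forms is minus the transpose of `R^∇`. -/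
theorem coCurv_apply (D : Conn A) (X Y Z : Vec A) (γ : Form A) :
    D.coCurv X Y γ Z = -γ (D.curv X Y Z) := by
  simp only [Conn.coCurv, Conn.coSmul, Conn.curv, LinearMap.sub_apply, LinearMap.coe_mk,
    AddHom.coe_mk, map_sub, Derivation.commutator_apply]
  ring

/-- curvature operators of `∇̂` and `∇̂*`, and flatness equivalence. -/
theorem statement7 (φ : Vec A ≃ₗ[A] Form A) (D : Conn A) (hqs : QuasiStat D φ) :
    (∀ σ τ ν : Gen A, gcurv D (hatConn D φ) σ τ ν
        = (D.curv σ.1 τ.1 ν.1, φ (D.curv σ.1 τ.1 (φ.symm ν.2)))) ∧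
    (∀ σ τ ν : Gen A, gcurv D (dualConn D φ) σ τ ν
        = (φ.symm (D.coCurv σ.1 τ.1 (φ ν.1)), D.coCurv σ.1 τ.1 ν.2)) ∧
    (((∀ σ τ ν : Gen A, gcurv D (hatConn D φ) σ τ ν = 0) ∧
      (∀ σ τ ν : Gen A, gcurv D (dualConn D φ) σ τ ν = 0)) ↔
      (∀ X Y Z : Vec A, D.curv X Y Z = 0)) := by
  have hhat : ∀ σ τ ν : Gen A, gcurv D (hatConn D φ) σ τ ν
      = (D.curv σ.1 τ.1 ν.1, φ (D.curv σ.1 τ.1 (φ.symm ν.2))) := by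
    intro σ τ ν
    simp only [gcurv, hatConn, gbracket, Conn.curv, LinearEquiv.symm_apply_apply, map_sub,
      Prod.mk_sub_mk]
  have hdual : ∀ σ τ ν : Gen A, gcurv D (dualConn D φ) σ τ ν
      = (φ.symm (D.coCurv σ.1 τ.1 (φ ν.1)), D.coCurv σ.1 τ.1 ν.2) := by
    intro σ τ ν
    simp only [gcurv, dualConn, gbracket, Conn.coCurv, LinearEquiv.apply_symm_apply, map_sub,
      Prod.mk_sub_mk]
  refine ⟨hhat, hdual, fun h X Y Z => ?_, fun h => ⟨fun σ τ ν => ?_, fun σ τ ν => ?_⟩⟩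
  · have h0 := h.1 (X, 0) (Y, 0) (Z, 0)
    rw [hhat] at h0
    exact congrArg Prod.fst h0
  · rw [hhat, h, h, map_zero, Prod.mk_zero_zero]
  · have hco : ∀ γ : Form A, D.coCurv σ.1 τ.1 γ = 0 := fun γ => LinearMap.ext fun Z => by
      rw [coCurv_apply, h, map_zero, neg_zero, LinearMap.zero_apply]
    rw [hdual, hco, hco, map_zero, Prod.mk_zero_zero]

end GQS
end

section
/- Let M be a smooth manifold, h a non-degenerate (0,2)-tensor field on M, ∇ an affine connection on M, and ∇̌ the connection on TM ⊕ T*M defined by ∇̌_{X+α}(Y+β) := ∇_X Y + ∇_X β. Let ĥ be the natural indefinite metric ⟨·,·⟩ or the natural symplectic structure (·,·) on TM ⊕ T*M. Then (TM ⊕ T*M, ĥ, ∇̌) is a generalized quasi-statistical manifold if and only if ∇ is torsion-free. -/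
/-!
The connection `∇̌` is built from `∇` and its dual, so both natural pairings are parallel for it.
Its torsion with respect to `[·,·]_∇` has no one-form part and has vector part `T^∇`, whence
`(d^∇̌ ĥ)(X+α, Y+β, Z+γ) = ∓ (1/2) γ(T^∇(X,Y))`. This vanishes for every `γ` exactly when
`T^∇ = 0`: a vector field killed by all exact forms `df` kills every function `f`.
-/


namespace GQS

variable (A : Type*) [CommRing A] [Algebra ℝ A]

variable {A}

/-- The differential `df`, as the one-form `X ↦ X f`. -/
def dform (f : A) : Form A where
  toFun X := X f
  map_add' _ _ := rfl
  map_smul' _ _ := rfl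

/-- The natural metric is `∇̌`-parallel, so only the torsion term of `d^∇̌` survives. -/
lemma gdiff_pairInd (D : Conn A) (σ τ ν : Gen A) :
    gdiff D (checkConn D) pairInd σ τ ν = -((2⁻¹ : ℝ) • ν.2 (D.torsion σ.1 τ.1)) := by
  simp only [gdiff, gcov, gtorsion, gbracket, checkConn, pairInd, Conn.coSmul, Conn.torsion,
    Prod.fst_sub, Prod.snd_sub, LinearMap.sub_apply, LinearMap.coe_mk, AddHom.coe_mk, map_neg,
    Derivation.map_smul, map_add, map_sub]
  module

/-- The natural symplectic structure is `∇̌`-parallel, so only the torsion term of `d^∇̌`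
survives. -/
lemma gdiff_pairSymp (D : Conn A) (σ τ ν : Gen A) :
    gdiff D (checkConn D) pairSymp σ τ ν = (2⁻¹ : ℝ) • ν.2 (D.torsion σ.1 τ.1) := by
  simp only [gdiff, gcov, gtorsion, gbracket, checkConn, pairSymp, Conn.coSmul, Conn.torsion,
    Prod.fst_sub, Prod.snd_sub, LinearMap.sub_apply, LinearMap.coe_mk, AddHom.coe_mk, map_neg,
    Derivation.map_smul, map_sub]
  module

/-- One-forms separate vector fields, the exact ones being enough. -/
lemma eq_zero_of_forall_form {T : Vec A} (hT : ∀ γ : Form A, γ T = 0) : T = 0 :=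
  Derivation.ext fun f => hT (dform f)

/-- `(TM ⊕ T*M, ĥ, ∇̌)` is a generalized quasi-statistical manifold iff `∇` is
torsion-free, for `ĥ` either the natural indefinite metric or the natural symplectic
structure. -/
theorem statement9 (φ : Vec A ≃ₗ[A] Form A) (D : Conn A) :
    (GenQuasiStat D (checkConn D) pairInd ↔ ∀ X Y : Vec A, D.torsion X Y = 0) ∧
    (GenQuasiStat D (checkConn D) pairSymp ↔ ∀ X Y : Vec A, D.torsion X Y = 0) := by
  refine ⟨⟨fun H X Y => eq_zero_of_forall_form fun γ => ?_, fun H σ τ ν => ?_⟩,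
    ⟨fun H X Y => eq_zero_of_forall_form fun γ => ?_, fun H σ τ ν => ?_⟩⟩
  · have h := H (X, 0) (Y, 0) (0, γ)
    rw [gdiff_pairInd, neg_eq_zero] at h
    exact (smul_eq_zero_iff_right (inv_ne_zero two_ne_zero)).1 h
  · rw [gdiff_pairInd, H, map_zero, smul_zero, neg_zero]
  · have h := H (X, 0) (Y, 0) (0, γ)
    rw [gdiff_pairSymp] at h
    exact (smul_eq_zero_iff_right (inv_ne_zero two_ne_zero)).1 h
  · rw [gdiff_pairSymp, H, map_zero, smul_zero]

end GQS
end

section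
/- Let ∇ be a torsion-free affine connection on a smooth manifold M and let h be a non-degenerate (0,2)-tensor field on M with ∇h = 0. Then (ȟ, ∇̌) is a generalized quasi-statistical structure on TM ⊕ T*M, where ȟ(X+α, Y+β) := h(X,Y) + h(h⁻¹(α), h⁻¹(β)) and ∇̌_{X+α}(Y+β) := ∇_X Y + ∇_X β. -/
/-!
Parallelism `∇h = 0` says exactly that `♭_h` intertwines `∇` with the induced connection on
one-forms, hence so does its inverse: `h⁻¹(∇_X α) = ∇_X h⁻¹(α)` (`symm_coSmul`). Therefore
`(∇̌_σ ȟ)(τ, ν)` splits into two values of `∇h`, one on the vector parts and one on `h⁻¹` of the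
form parts, and vanishes (`gcov_check_eq_zero`). The torsion of `∇̌` for `[·,·]_∇` vanishes too
(`gtorsion_check_eq_zero`): its vector part is the torsion of `∇`, and its form part cancels by
the definition of the bracket. Both ingredients of `d^∇̌ ȟ` are thus zero.
-/

namespace GQS

variable (A : Type*) [CommRing A] [Algebra ℝ A]

variable {A}

/-- If `∇h = 0`, then `h⁻¹` intertwines the connection on one-forms with the one on vector
fields. -/
theorem symm_coSmul (φ : Vec A ≃ₗ[A] Form A) (D : Conn A)
    (hpar : ∀ X Y Z : Vec A, covh D φ X Y Z = 0) (X : Vec A) (α : Form A) :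
    φ.symm (D.coSmul X α) = D.smul X (φ.symm α) := by
  rw [LinearEquiv.symm_apply_eq]
  ext1 Z
  have h := hpar X (φ.symm α) Z
  simp only [covh, LinearEquiv.apply_symm_apply] at h
  change X (α Z) - α (D.smul X Z) = _
  linear_combination h

theorem gcov_check_eq_zero (φ : Vec A ≃ₗ[A] Form A) (D : Conn A)
    (hpar : ∀ X Y Z : Vec A, covh D φ X Y Z = 0) (σ τ ν : Gen A) :
    gcov (checkConn D) (hcheck φ) σ τ ν = 0 := by
  have h₁ := hpar σ.1 τ.1 ν.1
  have h₂ := hpar σ.1 (φ.symm τ.2) (φ.symm ν.2)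
  simp only [covh] at h₁ h₂
  simp only [gcov, hcheck, checkConn, symm_coSmul φ D hpar, map_add]
  linear_combination h₁ + h₂

theorem gtorsion_check_eq_zero (D : Conn A) (htf : ∀ X Y : Vec A, D.torsion X Y = 0)
    (σ τ : Gen A) : gtorsion D (checkConn D) σ τ = 0 :=
  Prod.ext (htf σ.1 τ.1) (sub_self (D.coSmul σ.1 τ.2 - D.coSmul τ.1 σ.2))

/-- if `∇` is torsion-free and `∇h = 0`, then `(ȟ, ∇̌)` is a generalized
quasi-statistical structure on `TM ⊕ T*M`. -/
theorem statement11 (φ : Vec A ≃ₗ[A] Form A) (D : Conn A)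
    (htf : ∀ X Y : Vec A, D.torsion X Y = 0)
    (hpar : ∀ X Y Z : Vec A, covh D φ X Y Z = 0) :
    GenQuasiStat D (checkConn D) (hcheck φ) := by
  intro σ τ ν
  simp [gdiff, gcov_check_eq_zero φ D hpar, gtorsion_check_eq_zero D htf, hcheck]

end GQS
end

section
/- Let (M, h, ∇) be a quasi-statistical manifold such that ∇ is flat, with h symmetric or skew-symmetric. Then (TM, h^H, ∇̃̃) is a quasi-statistical manifold (i.e. d^{∇̃̃} h^H = 0) if and only if ∇h = 0, where h^H is the horizontal lift of h to TM and ∇̃̃ is the induced connection on TM. -/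
/-!
The tensor `d^{∇̃̃} h^H` is computed in the adapted frame. Write `u^k`, `û^k` for the horizontal
and vertical frame components of a vector field `U`, and similarly for `V`, `W`.

* In the adapted frame `∇̃̃` differentiates horizontal and vertical components by the same rule
  `U(·) + Γ^k_{ij} u^i (·)^j`, so `(∇̃̃_U h^H)(V, W) = u^k (∇_k h)_{ij} (v^i ŵ^j + v̂^i w^j)`
  (`covariant_horTan`).
* The horizontal part of the torsion of `∇̃̃` is the lift of the torsion of `∇` (`hcv_torsion`).
  In its vertical part the Christoffel terms cancel and only the curvature of `∇`, contracted with
  the fibre coordinate, survives; flatness makes it vanish (`vcvtan_torsion`).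
* The terms containing `ŵ` therefore assemble to `(d^∇h)_{kij} u^k v^i ŵ^j = 0`, which leaves
  `(d^{∇̃̃} h^H)(U, V, W) = (∇_k h)_{ij} (u^k v̂^i - v^k û^i) w^j` (`dTensor_horTan`).

The right-hand side vanishes if `∇h = 0`. Conversely, for `U`, `W` horizontal and `V` vertical
frame fields it is a single component of `∇h`.
-/

namespace GQSCoord

open scoped BigOperators

variable {n : ℕ}

/-- Points of the manifold `M` in a fixed local coordinate system `{x^1,...,x^n}`. -/
abbrev Pt (n : ℕ) := Fin n → ℝ
/-- Points of the total space of `T*M` (resp. `TM`) in the induced coordinates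
`{x̃^i, y_i}` (resp. `{x̃^i, y^i}`). -/
abbrev Tot (n : ℕ) := (Fin n → ℝ) × (Fin n → ℝ)

/-- The partial derivative `∂f/∂x^i`. -/
noncomputable def pd (i : Fin n) (f : Pt n → ℝ) (x : Pt n) : ℝ :=
  fderiv ℝ f x (Pi.single i 1)

/-- The action of a vector field `U` on the total space on a function `f`. -/
noncomputable def act (U : Tot n → Tot n) (f : Tot n → ℝ) (z : Tot n) : ℝ :=
  fderiv ℝ f z (U z)

/-- The Lie bracket of vector fields on the total space. -/
noncomputable def lie (U V : Tot n → Tot n) (z : Tot n) : Tot n :=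
  fderiv ℝ V z (U z) - fderiv ℝ U z (V z)

/-- Smooth functions. -/
def Smooth {E F : Type*} [NormedAddCommGroup E] [NormedSpace ℝ E]
    [NormedAddCommGroup F] [NormedSpace ℝ F] (f : E → F) : Prop :=
  ContDiff ℝ (⊤ : ℕ∞) f

variable (Γ : Pt n → Fin n → Fin n → Fin n → ℝ) (h hinv : Pt n → Fin n → Fin n → ℝ)

/- We encode an affine connection `∇` on `M` by its Christoffel symbols,
`Γ x i j k = Γ^k_{ij}(x)`, i.e. `∇_{∂_i} ∂_j = Γ^k_{ij} ∂_k`, a `(0,2)`-tensor field `h` by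
its components `h x i j = h_{ij}(x)`, and its (two-sided pointwise) inverse by
`hinv x i j = h^{ij}(x)`. -/

/-- `(∇_{∂_i} h)_{jk}`. -/
noncomputable def covh (x : Pt n) (i j k : Fin n) : ℝ :=
  pd i (fun x' => h x' j k) x - ∑ l, Γ x i j l * h x l k - ∑ l, Γ x i k l * h x j l

/-- `(d^∇ h)(∂_i, ∂_j, ∂_k)`. -/
noncomputable def dnabla (x : Pt n) (i j k : Fin n) : ℝ :=
  covh Γ h x i j k - covh Γ h x j i k + ∑ l, (Γ x i j l - Γ x j i l) * h x l k

/-- The curvature `R^l_{ijk}`, with `R^∇(∂_i, ∂_j)∂_k = R^l_{ijk} ∂_l`. -/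
noncomputable def curv (x : Pt n) (i j k l : Fin n) : ℝ :=
  pd i (fun x' => Γ x' j k l) x - pd j (fun x' => Γ x' i k l) x
    + ∑ r, Γ x j k r * Γ x i r l - ∑ r, Γ x i k r * Γ x j r l

/-! ### The cotangent bundle `T*M` -/

/-- The coefficient `y_k Γ^k_{il}` of the horizontal lift on `T*M`. -/
def cstar (z : Tot n) (i l : Fin n) : ℝ := ∑ k, z.2 k * Γ z.1 i l k

/-- The horizontal lift `X_i^H = ∂/∂x̃^i + y_k Γ^k_{il} ∂/∂y_l` on `T*M`. -/
def XHstar (i : Fin n) (z : Tot n) : Tot n := (Pi.single i 1, fun l => cstar Γ z i l)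

/-- The vertical frame field `∂/∂y_j`. -/
def VV (j : Fin n) (z : Tot n) : Tot n := (0, Pi.single j 1)

/-- The horizontal frame components of a tangent vector at a point of the total space. -/
def hcv (v : Tot n) (i : Fin n) : ℝ := v.1 i

/-- The vertical frame components of a tangent vector `v` at `z ∈ T*M`. -/
def vcvstar (z v : Tot n) (l : Fin n) : ℝ := v.2 l - ∑ i, v.1 i * cstar Γ z i l

/-- The coefficients of `∇̃_{X_i^H} ∂/∂y_j = (∂h^{jk}/∂x^i + h^{jl}Γ^k_{il}) h_{rk} ∂/∂y_r`. -/
noncomputable def Cstar (x : Pt n) (i j r : Fin n) : ℝ :=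
  ∑ k, (pd i (fun x' => hinv x' j k) x + ∑ l, hinv x j l * Γ x i l k) * h x r k

/-- The pull-back connection `∇̃` of `∇̂` on `T*M`, defined on arbitrary vector fields: in the
adapted frame it is given by `∇̃_{X_i^H} X_j^H = Γ^k_{ij} X_k^H`,
`∇̃_{X_i^H} ∂/∂y_j = (∂h^{jk}/∂x^i + h^{jl}Γ^k_{il}) h_{rk} ∂/∂y_r`,
`∇̃_{∂/∂y_j} X_i^H = 0` and `∇̃_{∂/∂y_i} ∂/∂y_j = 0`. -/
noncomputable def tconnStar (U W : Tot n → Tot n) (z : Tot n) : Tot n :=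
  (∑ i, act U (fun w => hcv (W w) i) z • XHstar Γ i z)
  + (∑ l, act U (fun w => vcvstar Γ w (W w) l) z • VV l z)
  + (∑ i, ∑ j, (hcv (U z) i * hcv (W z) j) • (∑ k, Γ z.1 i j k • XHstar Γ k z))
  + (∑ i, ∑ j, (hcv (U z) i * vcvstar Γ z (W z) j) •
      (∑ r, Cstar Γ h hinv z.1 i j r • VV r z))

/-- The Sasaki tensor `h^{S*}` on `T*M`, determined by `h^{S*}(X^H, Y^H) = h(X,Y)`,
`h^{S*}(α^V, β^V) = h(h⁻¹α, h⁻¹β)` and `h^{S*}(α^V, Y^H) = h^{S*}(X^H, β^V) = 0`. -/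
noncomputable def sasakiStar (U W : Tot n → Tot n) (z : Tot n) : ℝ :=
  (∑ i, ∑ j, hcv (U z) i * hcv (W z) j * h z.1 i j)
  + ∑ i, ∑ j, vcvstar Γ z (U z) i * vcvstar Γ z (W z) j *
      (∑ r, ∑ s, hinv z.1 i r * hinv z.1 j s * h z.1 r s)

/-- The (generalized) Patterson-Walker tensor `h̃_ε` on `T*M` (`ε = 1` gives `h̃_+`, `ε = -1`
gives `h̃_-`), determined by `h̃_ε(X^H, Y^H) = 0`, `h̃_ε(α^V, β^V) = 0`,
`h̃_ε(α^V, X^H) = α(X)` and `h̃_ε(X^H, α^V) = ε α(X)`. -/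
def pwStar (ε : ℝ) (U W : Tot n → Tot n) (z : Tot n) : ℝ :=
  (∑ i, vcvstar Γ z (U z) i * hcv (W z) i) + ε * ∑ i, hcv (U z) i * vcvstar Γ z (W z) i

/-! ### The tangent bundle `TM` -/

/-- The coefficient `y^k Γ^l_{ik}` of the horizontal lift on `TM`. -/
def ctan (z : Tot n) (i l : Fin n) : ℝ := ∑ k, z.2 k * Γ z.1 i k l

/-- The horizontal lift `X_i^H = ∂/∂x̃^i − y^k Γ^l_{ik} ∂/∂y^l` on `TM`. -/
def XHtan (i : Fin n) (z : Tot n) : Tot n := (Pi.single i 1, fun l => - ctan Γ z i l)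

/-- The vertical frame components of a tangent vector `v` at `z ∈ TM`. -/
def vcvtan (z v : Tot n) (l : Fin n) : ℝ := v.2 l + ∑ i, v.1 i * ctan Γ z i l

/-- The connection `∇̃̃` on `TM`, defined on arbitrary vector fields: in the adapted frame it
is given by `∇̃̃_{X_i^H} X_j^H = Γ^k_{ij} X_k^H`, `∇̃̃_{X_i^H} ∂/∂y^j = Γ^k_{ij} ∂/∂y^k`,
`∇̃̃_{∂/∂y^j} X_i^H = 0` and `∇̃̃_{∂/∂y^i} ∂/∂y^j = 0`. -/
noncomputable def tconnTan (U W : Tot n → Tot n) (z : Tot n) : Tot n :=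
  (∑ i, act U (fun w => hcv (W w) i) z • XHtan Γ i z)
  + (∑ l, act U (fun w => vcvtan Γ w (W w) l) z • VV l z)
  + (∑ i, ∑ j, (hcv (U z) i * hcv (W z) j) • (∑ k, Γ z.1 i j k • XHtan Γ k z))
  + (∑ i, ∑ j, (hcv (U z) i * vcvtan Γ z (W z) j) • (∑ k, Γ z.1 i j k • VV k z))

/-- The Sasaki tensor `h^S` on `TM`, determined by `h^S(X^H, Y^H) = h(X,Y)`,
`h^S(X^V, Y^V) = h(X,Y)` and `h^S(X^H, Y^V) = h^S(X^V, Y^H) = 0`. -/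
noncomputable def sasakiTan (U W : Tot n → Tot n) (z : Tot n) : ℝ :=
  (∑ i, ∑ j, hcv (U z) i * hcv (W z) j * h z.1 i j)
  + ∑ i, ∑ j, vcvtan Γ z (U z) i * vcvtan Γ z (W z) j * h z.1 i j

/-- The horizontal lift `h^H` of `h` to `TM`, determined by `h^H(X^H, Y^H) = 0`,
`h^H(X^V, Y^V) = 0` and `h^H(X^H, Y^V) = h^H(X^V, Y^H) = h(X,Y)`. -/
noncomputable def horTan (U W : Tot n → Tot n) (z : Tot n) : ℝ :=
  (∑ i, ∑ j, hcv (U z) i * vcvtan Γ z (W z) j * h z.1 i j)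
  + ∑ i, ∑ j, vcvtan Γ z (U z) i * hcv (W z) j * h z.1 i j

/-! ### `d^D g` and curvature for connections on the total space -/

/-- `(d^D g)(U,V,W) = (D_U g)(V,W) − (D_V g)(U,W) + g(T^D(U,V), W)`. -/
noncomputable def dTensor (conn : (Tot n → Tot n) → (Tot n → Tot n) → Tot n → Tot n)
    (g : (Tot n → Tot n) → (Tot n → Tot n) → Tot n → ℝ)
    (U V W : Tot n → Tot n) (z : Tot n) : ℝ :=
  (act U (g V W) z - g (fun w => conn U V w) W z - g V (fun w => conn U W w) z)
  - (act V (g U W) z - g (fun w => conn V U w) W z - g U (fun w => conn V W w) z)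
  + g (fun w => conn U V w - conn V U w - lie U V w) W z

/-- The curvature operator `R^D(U,V)W` of a connection on the total space. -/
noncomputable def curvConn (conn : (Tot n → Tot n) → (Tot n → Tot n) → Tot n → Tot n)
    (U V W : Tot n → Tot n) (z : Tot n) : Tot n :=
  conn U (fun w => conn V W w) z - conn V (fun w => conn U W w) z - conn (lie U V) W z


/-! ### Derivatives along a vector field -/

theorem act_eq {U : Tot n → Tot n} {f : Tot n → ℝ} {z : Tot n} {f' : Tot n →L[ℝ] ℝ}
    (hf : HasFDerivAt f f' z) : act U f z = f' (U z) := by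
  rw [act, hf.fderiv]

theorem act_add {U : Tot n → Tot n} {f g : Tot n → ℝ} {z : Tot n}
    (hf : DifferentiableAt ℝ f z) (hg : DifferentiableAt ℝ g z) :
    act U (fun w => f w + g w) z = act U f z + act U g z := by
  simp [act, fderiv_fun_add hf hg]

theorem act_mul {U : Tot n → Tot n} {f g : Tot n → ℝ} {z : Tot n}
    (hf : DifferentiableAt ℝ f z) (hg : DifferentiableAt ℝ g z) :
    act U (fun w => f w * g w) z = act U f z * g z + f z * act U g z := by
  simp [act, fderiv_fun_mul hf hg]; ring

theorem act_sum {ι : Type*} [Fintype ι] {U : Tot n → Tot n} {f : ι → Tot n → ℝ} {z : Tot n}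
    (hf : ∀ i, DifferentiableAt ℝ (f i) z) :
    act U (fun w => ∑ i, f i w) z = ∑ i, act U (f i) z := by
  simp [act, fderiv_fun_sum (fun i _ => hf i)]

/-- On a function pulled back from the base, a vector field acts through its horizontal
components alone. -/
theorem act_base {U : Tot n → Tot n} {f : Pt n → ℝ} {z : Tot n}
    (hf : DifferentiableAt ℝ f z.1) :
    act U (fun w => f w.1) z = ∑ k, (U z).1 k * pd k f z.1 := by
  have hd : HasFDerivAt (fun w : Tot n => f w.1) _ z := hf.hasFDerivAt.comp z hasFDerivAt_fst
  rw [act_eq hd]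
  simp only [ContinuousLinearMap.comp_apply, ContinuousLinearMap.coe_fst', pd]
  conv_lhs => rw [pi_eq_sum_univ' (U z).1]
  simp [map_sum]

theorem act_fst {U V : Tot n → Tot n} {z : Tot n} (hV : DifferentiableAt ℝ V z) (l : Fin n) :
    act U (fun w => (V w).1 l) z = (fderiv ℝ V z (U z)).1 l :=
  act_eq (f' := (ContinuousLinearMap.proj l).comp
    ((ContinuousLinearMap.fst ℝ (Pt n) (Pt n)).comp (fderiv ℝ V z)))
    ((((ContinuousLinearMap.proj (R := ℝ) (φ := fun _ : Fin n => ℝ) l).comp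
    (ContinuousLinearMap.fst ℝ (Pt n) (Pt n))).hasFDerivAt).comp z hV.hasFDerivAt)

theorem act_snd {U V : Tot n → Tot n} {z : Tot n} (hV : DifferentiableAt ℝ V z) (l : Fin n) :
    act U (fun w => (V w).2 l) z = (fderiv ℝ V z (U z)).2 l :=
  act_eq (f' := (ContinuousLinearMap.proj l).comp
    ((ContinuousLinearMap.snd ℝ (Pt n) (Pt n)).comp (fderiv ℝ V z)))
    ((((ContinuousLinearMap.proj (R := ℝ) (φ := fun _ : Fin n => ℝ) l).comp
    (ContinuousLinearMap.snd ℝ (Pt n) (Pt n))).hasFDerivAt).comp z hV.hasFDerivAt)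

/-! ### Frame components of the connection -/

theorem vcvtan_add (z v w : Tot n) (l : Fin n) :
    vcvtan Γ z (v + w) l = vcvtan Γ z v l + vcvtan Γ z w l := by
  simp [vcvtan, add_mul, Finset.sum_add_distrib]; ring

theorem vcvtan_sub (z v w : Tot n) (l : Fin n) :
    vcvtan Γ z (v - w) l = vcvtan Γ z v l - vcvtan Γ z w l := by
  simp [vcvtan, sub_mul, Finset.sum_sub_distrib]; ring

theorem vcvtan_smul (z v : Tot n) (c : ℝ) (l : Fin n) :
    vcvtan Γ z (c • v) l = c * vcvtan Γ z v l := by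
  simp [vcvtan, mul_add, Finset.mul_sum, mul_assoc]

theorem vcvtan_sum {ι : Type*} [Fintype ι] (z : Tot n) (f : ι → Tot n) (l : Fin n) :
    vcvtan Γ z (∑ i, f i) l = ∑ i, vcvtan Γ z (f i) l := by
  simp only [vcvtan, Prod.snd_sum, Prod.fst_sum, Finset.sum_apply, Finset.sum_mul,
    Finset.sum_add_distrib]
  rw [Finset.sum_comm (f := fun x y => (f y).1 x * ctan Γ z x l)]

theorem vcvtan_XHtan (z : Tot n) (i l : Fin n) : vcvtan Γ z (XHtan Γ i z) l = 0 := by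
  simp [vcvtan, XHtan, Pi.single_apply]

theorem vcvtan_VV (z : Tot n) (j l : Fin n) :
    vcvtan Γ z (VV j z) l = if l = j then 1 else 0 := by
  simp [vcvtan, VV, Pi.single_apply]

theorem hcv_tconnTan (U W : Tot n → Tot n) (z : Tot n) (k : Fin n) :
    hcv (tconnTan Γ U W z) k = act U (fun w => hcv (W w) k) z
      + ∑ i, ∑ j, hcv (U z) i * hcv (W z) j * Γ z.1 i j k := by
  simp [hcv, tconnTan, Prod.fst_sum, Finset.sum_apply, XHtan, VV, Pi.single_apply]

theorem vcvtan_tconnTan (U W : Tot n → Tot n) (z : Tot n) (k : Fin n) :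
    vcvtan Γ z (tconnTan Γ U W z) k = act U (fun w => vcvtan Γ w (W w) k) z
      + ∑ i, ∑ j, hcv (U z) i * vcvtan Γ z (W z) j * Γ z.1 i j k := by
  simp [tconnTan, vcvtan_add, vcvtan_sum, vcvtan_smul, vcvtan_XHtan, vcvtan_VV]

/-! ### The covariant derivative of the horizontal lift -/

/-- Moves the indices `k`, `r` of an inner contraction with `Γ` to the front, and the index `i` it
is contracted with to the innermost place. -/
theorem sum_rotate (F : Fin n → Fin n → Fin n → Fin n → ℝ) :
    ∑ i, ∑ j, ∑ k, ∑ r, F i j k r = ∑ k, ∑ r, ∑ j, ∑ i, F i j k r := by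
  calc _ = ∑ i, ∑ k, ∑ j, ∑ r, F i j k r :=
        Finset.sum_congr rfl fun i _ => Finset.sum_comm
    _ = ∑ k, ∑ i, ∑ j, ∑ r, F i j k r := Finset.sum_comm
    _ = ∑ k, ∑ i, ∑ r, ∑ j, F i j k r := Finset.sum_congr rfl fun k _ =>
        Finset.sum_congr rfl fun i _ => Finset.sum_comm
    _ = ∑ k, ∑ r, ∑ i, ∑ j, F i j k r := Finset.sum_congr rfl fun k _ => Finset.sum_comm
    _ = _ := Finset.sum_congr rfl fun k _ => Finset.sum_congr rfl fun r _ => Finset.sum_comm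

/-- Leibniz rule for `∇h`, with the component functions `α`, `β` differentiated by
`D_U α^i = U(α^i) + Γ^i_{kr} u^k α^r`. As `∇̃̃` treats horizontal and vertical components
in this same way, the lemma covers both halves of `h^H`. -/
theorem act_bilin {α β : Fin n → Tot n → ℝ} {z : Tot n} (U : Tot n → Tot n)
    (hα : ∀ i, DifferentiableAt ℝ (α i) z) (hβ : ∀ i, DifferentiableAt ℝ (β i) z)
    (hh : ∀ i j, DifferentiableAt ℝ (fun x => h x i j) z.1) :
    act U (fun w => ∑ i, ∑ j, α i w * β j w * h w.1 i j) z
      - ∑ i, ∑ j, (act U (α i) z + ∑ k, ∑ r, hcv (U z) k * α r z * Γ z.1 k r i)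
          * β j z * h z.1 i j
      - ∑ i, ∑ j, α i z * (act U (β j) z + ∑ k, ∑ r, hcv (U z) k * β r z * Γ z.1 k r j)
          * h z.1 i j
      = ∑ k, ∑ i, ∑ j, hcv (U z) k * covh Γ h z.1 k i j * (α i z * β j z) := by
  have hh' : ∀ i j, DifferentiableAt ℝ (fun w : Tot n => h w.1 i j) z := fun i j =>
    (hh i j).comp z differentiableAt_fst
  have e1 : act U (fun w => ∑ i, ∑ j, α i w * β j w * h w.1 i j) z =
      ∑ i, ∑ j, ((act U (α i) z * β j z + α i z * act U (β j) z) * h z.1 i j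
        + α i z * β j z * ∑ k, hcv (U z) k * pd k (fun x => h x i j) z.1) := by
    rw [act_sum (fun i => by fun_prop)]
    refine Finset.sum_congr rfl fun i _ => ?_
    rw [act_sum (fun i => by fun_prop)]
    refine Finset.sum_congr rfl fun j _ => ?_
    rw [act_mul (by fun_prop) (hh' i j), act_mul (hα i) (hβ j),
      act_base (f := fun x => h x i j) (hh i j)]
    rfl
  have e2 : ∑ i, ∑ j, (∑ k, ∑ r, hcv (U z) k * α r z * Γ z.1 k r i) * β j z * h z.1 i j
      = ∑ k, ∑ i, ∑ j, hcv (U z) k * (∑ l, Γ z.1 k i l * h z.1 l j) * (α i z * β j z) := by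
    simp only [Finset.sum_mul, Finset.mul_sum]
    rw [sum_rotate]
    refine Finset.sum_congr rfl fun k _ => Finset.sum_congr rfl fun i _ =>
      Finset.sum_congr rfl fun j _ => Finset.sum_congr rfl fun l _ => by ring
  have e3 : ∑ i, ∑ j, α i z * (∑ k, ∑ r, hcv (U z) k * β r z * Γ z.1 k r j) * h z.1 i j
      = ∑ k, ∑ i, ∑ j, hcv (U z) k * (∑ l, Γ z.1 k j l * h z.1 i l) * (α i z * β j z) := by
    simp only [Finset.sum_mul, Finset.mul_sum]
    rw [Finset.sum_comm, sum_rotate]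
    refine Finset.sum_congr rfl fun k _ => ?_
    rw [Finset.sum_comm]
    refine Finset.sum_congr rfl fun i _ =>
      Finset.sum_congr rfl fun j _ => Finset.sum_congr rfl fun l _ => by ring
  have e4 : ∑ i, ∑ j, α i z * β j z * ∑ k, hcv (U z) k * pd k (fun x => h x i j) z.1
      = ∑ k, ∑ i, ∑ j, hcv (U z) k * pd k (fun x => h x i j) z.1 * (α i z * β j z) := by
    simp only [Finset.mul_sum]
    calc _ = ∑ i, ∑ k, ∑ j, α i z * β j z * (hcv (U z) k * pd k (fun x => h x i j) z.1) :=
          Finset.sum_congr rfl fun i _ => Finset.sum_comm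
      _ = _ := Finset.sum_comm
      _ = _ := Finset.sum_congr rfl fun k _ => Finset.sum_congr rfl fun i _ =>
          Finset.sum_congr rfl fun j _ => by ring
  simp only [covh, mul_sub, sub_mul, add_mul, mul_add, Finset.sum_add_distrib,
    Finset.sum_sub_distrib] at *
  rw [e1, e2, e3, e4]
  ring

theorem differentiable_hcv {V : Tot n → Tot n} (hV : Differentiable ℝ V) (i : Fin n) :
    Differentiable ℝ (fun w => hcv (V w) i) := by
  unfold hcv
  fun_prop

theorem differentiable_ctan (hΓ : ∀ i j k, Differentiable ℝ fun x => Γ x i j k) (i l : Fin n) :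
    Differentiable ℝ (fun w => ctan Γ w i l) := by
  unfold ctan
  have := fun i j k => (hΓ i j k).comp (differentiable_fst (E := Pt n) (F := Pt n))
  simp only [Function.comp_def] at this
  fun_prop

theorem differentiable_vcvtan (hΓ : ∀ i j k, Differentiable ℝ fun x => Γ x i j k)
    {V : Tot n → Tot n} (hV : Differentiable ℝ V) (l : Fin n) :
    Differentiable ℝ (fun w => vcvtan Γ w (V w) l) := by
  unfold vcvtan
  have := fun i => differentiable_ctan Γ hΓ i l
  fun_prop

/-- `(∇̃̃_U h^H)(V, W) = u^k (∇_k h)_{ij} (v^i ŵ^j + v̂^i w^j)`. -/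
theorem covariant_horTan (hΓ : ∀ i j k, Differentiable ℝ fun x => Γ x i j k)
    (hh : ∀ i j, Differentiable ℝ fun x => h x i j) (U : Tot n → Tot n)
    {V W : Tot n → Tot n} (hV : Differentiable ℝ V) (hW : Differentiable ℝ W) (z : Tot n) :
    act U (horTan Γ h V W) z - horTan Γ h (fun w => tconnTan Γ U V w) W z
      - horTan Γ h V (fun w => tconnTan Γ U W w) z
      = ∑ k, ∑ i, ∑ j, hcv (U z) k * covh Γ h z.1 k i j *
          (hcv (V z) i * vcvtan Γ z (W z) j + vcvtan Γ z (V z) i * hcv (W z) j) := by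
  have dh : ∀ i j, Differentiable ℝ fun w : Tot n => h w.1 i j := fun i j =>
    (hh i j).comp differentiable_fst
  have da := differentiable_hcv hV
  have db := differentiable_vcvtan Γ hΓ hV
  have dc := differentiable_hcv hW
  have dd := differentiable_vcvtan Γ hΓ hW
  have h1 := act_bilin Γ h (z := z) U (fun i => da i z) (fun i => dd i z) (fun i j => hh i j z.1)
  have h2 := act_bilin Γ h (z := z) U (fun i => db i z) (fun i => dc i z) (fun i j => hh i j z.1)
  have h3 : act U (horTan Γ h V W) z
      = act U (fun w => ∑ i, ∑ j, hcv (V w) i * vcvtan Γ w (W w) j * h w.1 i j) z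
        + act U (fun w => ∑ i, ∑ j, vcvtan Γ w (V w) i * hcv (W w) j * h w.1 i j) z :=
    act_add (by fun_prop) (by fun_prop)
  rw [h3]
  simp only [horTan, hcv_tconnTan, vcvtan_tconnTan, mul_add (_ * covh Γ h _ _ _ _),
    Finset.sum_add_distrib]
  rw [← h1, ← h2]
  ring

/-! ### The torsion -/

/-- The horizontal part of the torsion of `∇̃̃` is the torsion of `∇`. -/
theorem hcv_torsion {U V : Tot n → Tot n} (hU : Differentiable ℝ U) (hV : Differentiable ℝ V)
    (z : Tot n) (l : Fin n) :
    hcv (tconnTan Γ U V z - tconnTan Γ V U z - lie U V z) l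
      = ∑ i, ∑ j, hcv (U z) i * hcv (V z) j * (Γ z.1 i j l - Γ z.1 j i l) := by
  have h1 := hcv_tconnTan Γ U V z l
  have h2 := hcv_tconnTan Γ V U z l
  rw [Finset.sum_comm] at h2
  have h3 := act_fst (U := U) (hV z) l
  have h4 := act_fst (U := V) (hU z) l
  have h5 : hcv (tconnTan Γ U V z - tconnTan Γ V U z - lie U V z) l
    = hcv (tconnTan Γ U V z) l - hcv (tconnTan Γ V U z) l
      - ((fderiv ℝ V z (U z)).1 l - (fderiv ℝ U z (V z)).1 l) := rfl
  simp only [mul_sub, Finset.sum_sub_distrib]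
  rw [h5, h1, h2, ← h3, ← h4]
  have : ∑ i, ∑ j, hcv (V z) j * hcv (U z) i * Γ z.1 j i l
    = ∑ i, ∑ j, hcv (U z) i * hcv (V z) j * Γ z.1 j i l :=
    Finset.sum_congr rfl fun i _ => Finset.sum_congr rfl fun j _ => by ring
  rw [this]
  simp only [hcv]
  ring

/-- The derivative of the lift coefficient `y^k Γ^l_{ik}`, with `U` split into its frame components.
The inner bracket, antisymmetrized in `m` and `i`, is the curvature of `∇`. -/
theorem act_ctan (hΓ : ∀ i j k, Differentiable ℝ fun x => Γ x i j k) (U : Tot n → Tot n)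
    (z : Tot n) (i l : Fin n) :
    act U (fun w => ctan Γ w i l) z = ∑ k, vcvtan Γ z (U z) k * Γ z.1 i k l
      + ∑ m, hcv (U z) m * ∑ k, z.2 k *
        (pd m (fun x => Γ x i k l) z.1 - ∑ r, Γ z.1 m k r * Γ z.1 i r l) := by
  have dΓ := fun i j k => (hΓ i j k).comp (differentiable_fst (E := Pt n) (F := Pt n))
  simp only [Function.comp_def] at dΓ
  have e : ∀ k, act U (fun w => w.2 k) z = (U z).2 k := fun k => by
    rw [act_snd (V := fun w => w) differentiableAt_id]; simp
  unfold ctan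
  rw [act_sum (fun k => by fun_prop)]
  have e0 : ∀ k, act U (fun w => w.2 k * Γ w.1 i k l) z
      = (U z).2 k * Γ z.1 i k l
        + z.2 k * ∑ m, (U z).1 m * pd m (fun x => Γ x i k l) z.1 := fun k => by
    rw [act_mul (by fun_prop) (dΓ i k l z), e, act_base (f := fun x => Γ x i k l) (hΓ _ _ _ z.1)]
  simp only [e0]
  simp only [vcvtan, hcv, ctan, mul_sub, add_mul, Finset.sum_add_distrib, Finset.sum_sub_distrib,
    Finset.mul_sum, Finset.sum_mul]
  have e1 : ∑ k, ∑ m, z.2 k * ((U z).1 m * pd m (fun x => Γ x i k l) z.1)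
      = ∑ m, ∑ k, (U z).1 m * (z.2 k * pd m (fun x => Γ x i k l) z.1) := by
    rw [Finset.sum_comm]
    exact Finset.sum_congr rfl fun i _ => Finset.sum_congr rfl fun j _ => by ring
  have e2 : ∑ r, ∑ m, ∑ k, (U z).1 m * (z.2 k * Γ z.1 m k r) * Γ z.1 i r l
      = ∑ m, ∑ k, ∑ r, (U z).1 m * (z.2 k * (Γ z.1 m k r * Γ z.1 i r l)) := by
    rw [Finset.sum_comm]
    refine Finset.sum_congr rfl fun m _ => ?_
    rw [Finset.sum_comm]
    exact Finset.sum_congr rfl fun i _ => Finset.sum_congr rfl fun j _ => by ring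
  rw [e1, e2]
  ring

/-- The vertical frame components depend on the base point through `ctan`, which accounts for
the correction to the derivative of `V`. -/
theorem act_vcvtan (hΓ : ∀ i j k, Differentiable ℝ fun x => Γ x i j k) (U : Tot n → Tot n)
    {V : Tot n → Tot n} (hV : Differentiable ℝ V) (z : Tot n) (l : Fin n) :
    act U (fun w => vcvtan Γ w (V w) l) z = vcvtan Γ z (fderiv ℝ V z (U z)) l
      + ∑ i, hcv (V z) i * act U (fun w => ctan Γ w i l) z := by
  have := fun i => differentiable_ctan Γ hΓ i l
  unfold vcvtan
  rw [act_add (by fun_prop) (by fun_prop), act_sum (fun k => by fun_prop), act_snd (hV z)]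
  have e : ∀ i, act U (fun w => (V w).1 i * ctan Γ w i l) z
      = (fderiv ℝ V z (U z)).1 i * ctan Γ z i l
        + (V z).1 i * act U (fun w => ctan Γ w i l) z := fun i => by
    rw [act_mul (by fun_prop) (this i z), act_fst (hV z)]
  simp only [e, Finset.sum_add_distrib, hcv]
  ring

/-- The torsion of `∇̃̃` has no vertical part when `∇` is flat. -/
theorem vcvtan_torsion (hΓ : ∀ i j k, Differentiable ℝ fun x => Γ x i j k)
    {U V : Tot n → Tot n} (hU : Differentiable ℝ U) (hV : Differentiable ℝ V)
    (z : Tot n) (hflat : ∀ i j k l, curv Γ z.1 i j k l = 0) (l : Fin n) :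
    vcvtan Γ z (tconnTan Γ U V z - tconnTan Γ V U z - lie U V z) l = 0 := by
  -- Flatness: the curvature terms of `act_ctan` are symmetric in `U` and `V`.
  have hR : ∑ i, hcv (V z) i * ∑ m, hcv (U z) m * ∑ k, z.2 k *
        (pd m (fun x => Γ x i k l) z.1 - ∑ r, Γ z.1 m k r * Γ z.1 i r l)
      = ∑ i, hcv (U z) i * ∑ m, hcv (V z) m * ∑ k, z.2 k *
        (pd m (fun x => Γ x i k l) z.1 - ∑ r, Γ z.1 m k r * Γ z.1 i r l) := by
    simp only [Finset.mul_sum (s := Finset.univ) (f := fun m => hcv _ m * _)]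
    rw [Finset.sum_comm]
    refine Finset.sum_congr rfl fun m _ => Finset.sum_congr rfl fun i _ => ?_
    have : ∀ k, pd m (fun x => Γ x i k l) z.1 - ∑ r, Γ z.1 m k r * Γ z.1 i r l
        = pd i (fun x => Γ x m k l) z.1 - ∑ r, Γ z.1 i k r * Γ z.1 m r l := fun k => by
      have := hflat m i k l
      simp only [curv] at this
      linarith
    simp only [this]
    ring
  have hS : ∀ a b : Fin n → ℝ, ∑ i, a i * ∑ k, b k * Γ z.1 i k l
      = ∑ i, ∑ k, a i * b k * Γ z.1 i k l := fun a b => by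
    simp only [Finset.mul_sum, mul_assoc]
  rw [vcvtan_sub, vcvtan_sub, lie, vcvtan_sub, vcvtan_tconnTan, vcvtan_tconnTan,
    act_vcvtan Γ hΓ U hV, act_vcvtan Γ hΓ V hU]
  simp only [act_ctan Γ hΓ, mul_add, Finset.sum_add_distrib, hS]
  rw [hR]
  ring

/-! ### The exterior covariant derivative -/

/-- The full formula for `d^{∇̃̃} h^H` when `∇` is flat and `d^∇h = 0`. No vertical component
of `W` occurs in it. -/
theorem dTensor_horTan (hΓ : ∀ i j k, Differentiable ℝ fun x => Γ x i j k)
    (hh : ∀ i j, Differentiable ℝ fun x => h x i j)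
    {U V W : Tot n → Tot n} (hU : Differentiable ℝ U) (hV : Differentiable ℝ V)
    (hW : Differentiable ℝ W) (z : Tot n) (hqs : ∀ i j k, dnabla Γ h z.1 i j k = 0)
    (hflat : ∀ i j k l, curv Γ z.1 i j k l = 0) :
    dTensor (tconnTan Γ) (horTan Γ h) U V W z
      = ∑ k, ∑ i, ∑ j, covh Γ h z.1 k i j *
        (hcv (U z) k * vcvtan Γ z (V z) i - hcv (V z) k * vcvtan Γ z (U z) i) * hcv (W z) j := by
  have hT : horTan Γ h (fun w => tconnTan Γ U V w - tconnTan Γ V U w - lie U V w) W z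
      = ∑ k, ∑ i, ∑ j, hcv (U z) k * hcv (V z) i * vcvtan Γ z (W z) j *
        ∑ l, (Γ z.1 k i l - Γ z.1 i k l) * h z.1 l j := by
    simp only [horTan, hcv_torsion Γ hU hV, vcvtan_torsion Γ hΓ hU hV z hflat, Finset.sum_mul,
      Finset.mul_sum, zero_mul, Finset.sum_const_zero, add_zero]
    rw [sum_rotate]
    exact Finset.sum_congr rfl fun k _ => Finset.sum_congr rfl fun i _ =>
      Finset.sum_congr rfl fun j _ => Finset.sum_congr rfl fun l _ => by ring
  have hswap : ∑ k, ∑ i, ∑ j, hcv (V z) k * covh Γ h z.1 k i j *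
          (hcv (U z) i * vcvtan Γ z (W z) j)
      = ∑ k, ∑ i, ∑ j, hcv (U z) k * hcv (V z) i * vcvtan Γ z (W z) j * covh Γ h z.1 i k j := by
    rw [Finset.sum_comm]
    exact Finset.sum_congr rfl fun k _ => Finset.sum_congr rfl fun i _ =>
      Finset.sum_congr rfl fun j _ => by ring
  -- The condition `d^∇h = 0`, contracted with `u^k v^i ŵ^j`.
  have hcancel : ∀ k i j, hcv (U z) k * covh Γ h z.1 k i j * (hcv (V z) i * vcvtan Γ z (W z) j)
      = hcv (U z) k * hcv (V z) i * vcvtan Γ z (W z) j * covh Γ h z.1 i k j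
        - hcv (U z) k * hcv (V z) i * vcvtan Γ z (W z) j *
          ∑ l, (Γ z.1 k i l - Γ z.1 i k l) * h z.1 l j := fun k i j => by
    have := hqs k i j
    simp only [dnabla] at this
    linear_combination hcv (U z) k * hcv (V z) i * vcvtan Γ z (W z) j * this
  rw [dTensor, covariant_horTan Γ h hΓ hh U hV hW, covariant_horTan Γ h hΓ hh V hU hW, hT]
  simp only [mul_add (_ * covh Γ h _ _ _ _), Finset.sum_add_distrib, hswap, hcancel, mul_sub,
    sub_mul _ _ (hcv (W z) _), Finset.sum_sub_distrib]
  have e1 : ∀ A B : Fin n → ℝ, ∑ k, ∑ i, ∑ j, A k * covh Γ h z.1 k i j * (B i * hcv (W z) j)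
      = ∑ k, ∑ i, ∑ j, covh Γ h z.1 k i j * (A k * B i) * hcv (W z) j := fun A B =>
    Finset.sum_congr rfl fun k _ => Finset.sum_congr rfl fun i _ =>
      Finset.sum_congr rfl fun j _ => by ring
  rw [e1 (hcv (U z)) (vcvtan Γ z (V z)), e1 (hcv (V z)) (vcvtan Γ z (U z))]
  ring

/-- if `(M, h, ∇)` is a quasi-statistical manifold with `∇` flat and `h`
symmetric or skew-symmetric, then `(TM, h^H, ∇̃̃)` is a quasi-statistical manifold
(`d^{∇̃̃} h^H = 0`) if and only if `∇h = 0`. -/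
theorem statement18 {n : ℕ} (Γ : Pt n → Fin n → Fin n → Fin n → ℝ)
    (h hinv : Pt n → Fin n → Fin n → ℝ)
    (hsmoothΓ : ∀ i j k, Smooth fun x => Γ x i j k)
    (hsmoothh : ∀ i j, Smooth fun x => h x i j)
    (hsmoothhinv : ∀ i j, Smooth fun x => hinv x i j)
    (hleft : ∀ x i j, ∑ k, hinv x i k * h x k j = if i = j then (1 : ℝ) else 0)
    (hright : ∀ x i j, ∑ k, h x i k * hinv x k j = if i = j then (1 : ℝ) else 0)
    (hsymskew : (∀ x i j, h x i j = h x j i) ∨ (∀ x i j, h x i j = - h x j i))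
    (hqs : ∀ x i j k, dnabla Γ h x i j k = 0)
    (hflat : ∀ x i j k l, curv Γ x i j k l = 0) :
    (∀ U V W : Tot n → Tot n, Smooth U → Smooth V → Smooth W → ∀ z,
        dTensor (tconnTan Γ) (horTan Γ h) U V W z = 0) ↔
    (∀ x i j k, covh Γ h x i j k = 0) := by
  have dΓ : ∀ i j k, Differentiable ℝ fun x => Γ x i j k := fun i j k =>
    (hsmoothΓ i j k).differentiable (by simp)
  have dh : ∀ i j, Differentiable ℝ fun x => h x i j := fun i j =>
    (hsmoothh i j).differentiable (by simp)
  constructor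
  · intro H x i j k
    -- Along the zero section the frame `X_i^H, ∂/∂y^j` is the coordinate frame, so constant
    -- vector fields already isolate a single component of `∇h`.
    have h1 := H (fun _ => (Pi.single i 1, 0)) (fun _ => (0, Pi.single j 1))
      (fun _ => (Pi.single k 1, 0)) contDiff_const contDiff_const contDiff_const (x, 0)
    rw [dTensor_horTan Γ h dΓ dh (differentiable_const _) (differentiable_const _)
      (differentiable_const _) _ (hqs x) (hflat x)] at h1
    simpa [hcv, vcvtan, ctan, Pi.single_apply] using h1
  · intro H U V W hU hV hW z
    rw [dTensor_horTan Γ h dΓ dh (hU.differentiable (by simp)) (hV.differentiable (by simp))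
      (hW.differentiable (by simp)) z (hqs z.1) (hflat z.1)]
    simp [H]

end GQSCoord
end

section
/- Let (M, h) be a pseudo-Riemannian manifold and ∇ an affine connection on M, and define on T*M the structures J̃^∇_∓ := Φ^∇ ∘ Ĵ_∓ ∘ (Φ^∇)⁻¹ (where Ĵ_− = Ĵ_c, Ĵ_+ = Ĵ_p) and the Patterson-Walker metric h̃. Then (T*M, J̃^∇_−, h̃) is a Norden manifold and (T*M, J̃^∇_+, h̃) is an almost Para-Norden manifold. Moreover, if (M, h, ∇) is a flat quasi-statistical manifold, then (T*M, J̃^∇_−, h̃) is a complex Norden manifold and (T*M, J̃^∇_+, h̃) is a Para-Norden manifold. -/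
/-!
Every tangent vector `v` at `z ∈ T*M` is determined by its horizontal components `v.1` and its
vertical components `vcvstar Γ z v` in the adapted frame, and in these components
`J̃_s (a, β) = (s h⁻¹ β, h a)` (`JL_fst`, `vcvstar_JL`). The identity `J̃_s² = s`, the symmetry
of `J̃_s` with respect to `h̃`, and the description of the `ε`-eigenspace of `J̃_+` as the graph
`{(a, ε h a)}` over the horizontal space (hence of rank `n`) are then immediate.

For integrability, expanding the Lie brackets shows that the derivatives of the fields `U`, `V`
cancel: with `D` the derivative of the endomorphism field `J` at `z`,
`N_J(U,V) = S(U,V) - S(V,U)` where `S(u,v) = D(Ju) v - J (D(u) v)` (`nijJ_eq`). So `N_J` is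
pointwise bilinear. Differentiating `J² = s` gives `D(w) J = - J D(w)`, whence
`N_J(Ju,v) = -J N_J(u,v)`. Since the `X_i^H` and `J X_i^H` together span the tangent space, it
suffices that `N_J(X_i^H, X_j^H) = 0` (`antisymm_eq_zero`). There `[X_i^H, X_j^H] = 0` by flatness,
`[J X_i^H, J X_j^H] = 0` because both fields are vertical and constant along fibres, and
`[J X_i^H, X_j^H] + [X_i^H, J X_j^H]` has the components of `(d^∇ h)(∂_i, ∂_j, ·)`, which vanish.
-/

namespace GQSCoord

open scoped BigOperators

variable {n : ℕ}

variable (Γ : Pt n → Fin n → Fin n → Fin n → ℝ) (h hinv : Pt n → Fin n → Fin n → ℝ)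

/-! ### Norden and Para-Norden structures on `T*M` (STATEMENT 19) -/

/-- The vertical frame components, as a linear map on the tangent space at `z ∈ T*M`. -/
noncomputable def vcvLin (z : Tot n) : Tot n →ₗ[ℝ] (Fin n → ℝ) :=
  LinearMap.snd ℝ (Fin n → ℝ) (Fin n → ℝ)
    - (Matrix.toLin' (Matrix.of fun l i => cstar Γ z i l)).comp
        (LinearMap.fst ℝ (Fin n → ℝ) (Fin n → ℝ))

/-- The horizontal part of `J̃^∇_s` (`s = -1` for `Ĵ_c`, `s = 1` for `Ĵ_p`):
`J̃^∇_s(∂/∂y_j) = s · h^{jk} X_k^H`. -/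
noncomputable def JLhor (s : ℝ) (z : Tot n) : Tot n →ₗ[ℝ] (Fin n → ℝ) :=
  (Matrix.toLin' (Matrix.of fun k j => s * hinv z.1 j k)).comp (vcvLin Γ z)

/-- The structure `J̃^∇_s = Φ^∇ ∘ Ĵ_s ∘ (Φ^∇)⁻¹` on `T*M` (`s = -1`: `J̃^∇_-`, coming from the
generalized complex structure `Ĵ_c`; `s = 1`: `J̃^∇_+`, coming from the generalized product
structure `Ĵ_p`), as a field of endomorphisms of the tangent spaces.  In the adapted frame,
`J̃^∇_s(X_i^H) = h_{ik} ∂/∂y_k` and `J̃^∇_s(∂/∂y_j) = s · h^{jk} X_k^H`. -/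
noncomputable def JL (s : ℝ) (z : Tot n) : Tot n →ₗ[ℝ] Tot n :=
  (JLhor Γ hinv s z).prod
    ((Matrix.toLin' (Matrix.of fun k i => h z.1 i k)).comp
        (LinearMap.fst ℝ (Fin n → ℝ) (Fin n → ℝ))
      + (Matrix.toLin' (Matrix.of fun l k => cstar Γ z k l)).comp (JLhor Γ hinv s z))

/-- The Patterson-Walker metric `h̃` at a point `z ∈ T*M`:
`h̃(X^H, Y^H) = 0`, `h̃(α^V, β^V) = 0`, `h̃(α^V, X^H) = h̃(X^H, α^V) = α(X)`. -/
def pwPt (z u v : Tot n) : ℝ :=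
  (∑ i, vcvstar Γ z u i * hcv v i) + ∑ i, hcv u i * vcvstar Γ z v i

/-- The `(1,1)`-tensor field `J̃^∇_s` applied to a vector field on `T*M`. -/
noncomputable def JVF (s : ℝ) (U : Tot n → Tot n) : Tot n → Tot n :=
  fun z => JL Γ h hinv s z (U z)

/-- The Nijenhuis tensor of the `(1,1)`-tensor field `J̃^∇_s` on `T*M`:
`N_J(U,V) = [JU, JV] − J[JU, V] − J[U, JV] + J²[U, V]`. -/
noncomputable def nijJ (s : ℝ) (U V : Tot n → Tot n) (z : Tot n) : Tot n :=
  lie (JVF Γ h hinv s U) (JVF Γ h hinv s V) z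
    - JL Γ h hinv s z (lie (JVF Γ h hinv s U) V z)
    - JL Γ h hinv s z (lie U (JVF Γ h hinv s V) z)
    + JL Γ h hinv s z (JL Γ h hinv s z (lie U V z))

/-! ### The structures in the adapted frame -/

theorem tot_ext_adapted {z u v : Tot n} (h1 : u.1 = v.1)
    (h2 : ∀ l, vcvstar Γ z u l = vcvstar Γ z v l) : u = v := by
  refine Prod.ext h1 (funext fun l => ?_)
  have := h2 l
  simp only [vcvstar, h1] at this
  linarith

theorem vcvLin_apply (z v : Tot n) (l : Fin n) : vcvLin Γ z v l = vcvstar Γ z v l := by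
  simp [vcvLin, vcvstar, Matrix.toLin'_apply, Matrix.mulVec, dotProduct, mul_comm]

theorem JL_fst (s : ℝ) (z u : Tot n) (k : Fin n) :
    (JL Γ h hinv s z u).1 k = ∑ j, s * hinv z.1 j k * vcvstar Γ z u j := by
  simp [JL, JLhor, Matrix.toLin'_apply, Matrix.mulVec, dotProduct, vcvLin_apply]

theorem JL_snd (s : ℝ) (z u : Tot n) (l : Fin n) :
    (JL Γ h hinv s z u).2 l = ∑ i, h z.1 i l * u.1 i
      + ∑ k, cstar Γ z k l * (JL Γ h hinv s z u).1 k := by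
  simp [JL, Matrix.toLin'_apply, Matrix.mulVec, dotProduct]

theorem vcvstar_JL (s : ℝ) (z u : Tot n) (l : Fin n) :
    vcvstar Γ z (JL Γ h hinv s z u) l = ∑ i, h z.1 i l * u.1 i := by
  simp only [vcvstar, JL_snd, mul_comm (cstar Γ z _ l)]
  ring

/-- Mutually inverse matrices `A`, `B` cancel when applied to `v`, with both acting from the right
(`v ↦ v A B`). -/
theorem sum_delta {A B : Fin n → Fin n → ℝ}
    (hAB : ∀ i j, ∑ k, A i k * B k j = if i = j then (1 : ℝ) else 0) (v : Fin n → ℝ) (l : Fin n) :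
    ∑ j, B j l * ∑ i, A i j * v i = v l := by
  simp only [Finset.mul_sum]
  rw [Finset.sum_comm]
  have : ∀ i, ∑ j, B j l * (A i j * v i) = (if i = l then 1 else 0) * v i := by
    intro i
    rw [← hAB, Finset.sum_mul]
    exact Finset.sum_congr rfl fun j _ => by ring
  simp [this]

variable {Γ h hinv}

theorem JL_sq (hleft : ∀ x i j, ∑ k, hinv x i k * h x k j = if i = j then (1 : ℝ) else 0)
    (hright : ∀ x i j, ∑ k, h x i k * hinv x k j = if i = j then (1 : ℝ) else 0)
    (s : ℝ) (z v : Tot n) : JL Γ h hinv s z (JL Γ h hinv s z v) = s • v := by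
  have hs : ∀ l, vcvstar Γ z (s • v) l = s * vcvstar Γ z v l := by
    intro l
    simp [vcvstar, mul_sub, Finset.mul_sum, mul_assoc]
  refine tot_ext_adapted Γ (z := z) (funext fun k => ?_) fun l => ?_
  · simp only [JL_fst, vcvstar_JL, mul_assoc]
    rw [← Finset.mul_sum, sum_delta (hright z.1)]
    simp
  · simp only [vcvstar_JL, JL_fst, mul_assoc, ← Finset.mul_sum, hs]
    simp only [mul_left_comm _ s, ← Finset.mul_sum]
    rw [sum_delta (hleft z.1)]

/-- The inverse of a symmetric matrix is symmetric. -/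
theorem hinv_symm (hsym : ∀ x i j, h x i j = h x j i)
    (hleft : ∀ x i j, ∑ k, hinv x i k * h x k j = if i = j then (1 : ℝ) else 0)
    (x : Pt n) (i j : Fin n) : hinv x i j = hinv x j i := by
  have h1 : Matrix.of (hinv x) * Matrix.of (h x) = 1 := by
    ext i j
    simp [Matrix.mul_apply, hleft, Matrix.one_apply]
  have h2 : (Matrix.of (h x)).transpose = Matrix.of (h x) := by
    ext i j
    simp [Matrix.transpose_apply, hsym x i j]
  have h3 : Matrix.of (h x) * (Matrix.of (hinv x)).transpose = 1 := by
    have := congrArg Matrix.transpose h1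
    rwa [Matrix.transpose_mul, h2, Matrix.transpose_one] at this
  have h4 := left_inv_eq_right_inv h1 h3
  simpa using congrFun (congrFun h4 i) j

theorem pwPt_JL (hsym : ∀ x i j, h x i j = h x j i) (gsym : ∀ x i j, hinv x i j = hinv x j i)
    (s : ℝ) (z u v : Tot n) :
    pwPt Γ z (JL Γ h hinv s z u) v = pwPt Γ z u (JL Γ h hinv s z v) := by
  simp only [pwPt, hcv, vcvstar_JL, JL_fst, Finset.sum_mul, Finset.mul_sum]
  rw [add_comm]
  congr 1
  · rw [Finset.sum_comm]
    refine Finset.sum_congr rfl fun i _ => Finset.sum_congr rfl fun j _ => ?_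
    rw [gsym]
    ring
  · rw [Finset.sum_comm]
    refine Finset.sum_congr rfl fun i _ => Finset.sum_congr rfl fun j _ => ?_
    rw [hsym]
    ring

/-- For `ε² = 1` the `ε`-eigenspace of `J̃_+` is the graph `{(a, ε h a)}` (in adapted components)
over the horizontal space, so it has rank `n`. -/
theorem finrank_eigenspace
    (hright : ∀ x i j, ∑ k, h x i k * hinv x k j = if i = j then (1 : ℝ) else 0)
    (ε : ℝ) (hε : ε * ε = 1) (z : Tot n) :
    Module.finrank ℝ (Module.End.eigenspace (JL Γ h hinv 1 z) ε) = n := by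
  let φ : (Fin n → ℝ) →ₗ[ℝ] Tot n := LinearMap.prod LinearMap.id
    (Matrix.toLin' (Matrix.of fun l i => cstar Γ z i l)
      + ε • Matrix.toLin' (Matrix.of fun l i => h z.1 i l))
  have hφ1 : ∀ a, (φ a).1 = a := fun a => rfl
  have hφ2 : ∀ a l, vcvstar Γ z (φ a) l = ε * ∑ i, h z.1 i l * a i := by
    intro a l
    simp [φ, vcvstar, Matrix.toLin'_apply, Matrix.mulVec, dotProduct, mul_comm]
  have hsmul : ∀ v l, vcvstar Γ z (ε • v) l = ε * vcvstar Γ z v l := by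
    intro v l
    simp [vcvstar, mul_sub, Finset.mul_sum, mul_assoc]
  have hinj : Function.Injective φ := fun a b hab => by
    simpa [hφ1] using congrArg Prod.fst hab
  have hrange : Module.End.eigenspace (JL Γ h hinv 1 z) ε = LinearMap.range φ := by
    ext v
    rw [Module.End.mem_eigenspace_iff, LinearMap.mem_range]
    constructor
    · intro hv
      refine ⟨v.1, tot_ext_adapted Γ (z := z) (hφ1 _) fun l => ?_⟩
      rw [hφ2, ← vcvstar_JL Γ h hinv 1, hv, hsmul, ← mul_assoc, hε, one_mul]
    · rintro ⟨a, rfl⟩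
      refine tot_ext_adapted Γ (z := z) (funext fun k => ?_) fun l => ?_
      · simp only [JL_fst, hφ2, one_mul, mul_left_comm _ ε, ← Finset.mul_sum]
        rw [sum_delta (hright z.1)]
        simp [hφ1]
      · rw [vcvstar_JL, hsmul, hφ2, ← mul_assoc, hε, one_mul, hφ1]
  rw [hrange, LinearMap.finrank_range_of_inj hinj]
  simp

/-! ### The Nijenhuis tensor as a pointwise bilinear expression -/

/-- Algebraic reduction: an antisymmetric bilinear `T` with `T (J u) v = -J (T u v)` which vanishes
on a family `X` vanishes as soon as `X` together with `J X` spans. -/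
theorem antisymm_eq_zero {ι E : Type*} [AddCommGroup E] [Module ℝ E] (J : E →ₗ[ℝ] E)
    (T : E →ₗ[ℝ] E →ₗ[ℝ] E) (hanti : ∀ u v, T u v = - T v u)
    (hJ : ∀ u v, T (J u) v = - J (T u v)) (X : ι → E)
    (hspan : Submodule.span ℝ (Set.range (Sum.elim X fun i => J (X i))) = ⊤)
    (hX : ∀ i j, T (X i) (X j) = 0) : T = 0 := by
  have hJ' : ∀ u v, T u (J v) = - J (T u v) := by
    intro u v
    rw [hanti, hJ, hanti v u]
    simp
  refine LinearMap.ext_on_range hspan fun i => LinearMap.ext_on_range hspan fun j => ?_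
  rcases i with i | i <;> rcases j with j | j <;> simp [hJ, hJ', hX]

variable (Γ h hinv)

/-- The endomorphism field `J̃_s` with values in the normed space of continuous linear maps. -/
noncomputable def Jc (s : ℝ) (z : Tot n) : Tot n →L[ℝ] Tot n :=
  LinearMap.toContinuousLinearMap (JL Γ h hinv s z)

theorem Jc_apply (s : ℝ) (z v : Tot n) : Jc Γ h hinv s z v = JL Γ h hinv s z v := rfl

variable {Γ h hinv}

theorem contDiff_coord_fst (i : Fin n) : ContDiff ℝ (⊤ : ℕ∞) fun z : Tot n => z.1 i :=
  (contDiff_apply ℝ ℝ i).comp contDiff_fst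

theorem contDiff_coord_snd (i : Fin n) : ContDiff ℝ (⊤ : ℕ∞) fun z : Tot n => z.2 i :=
  (contDiff_apply ℝ ℝ i).comp contDiff_snd

theorem contDiff_cstar (hΓ : ∀ i j k, Smooth fun x => Γ x i j k) (i l : Fin n) :
    ContDiff ℝ (⊤ : ℕ∞) fun z : Tot n => cstar Γ z i l := by
  unfold cstar
  exact ContDiff.sum fun k _ => (contDiff_coord_snd k).mul ((hΓ i l k).comp contDiff_fst)

theorem contDiff_JL (hΓ : ∀ i j k, Smooth fun x => Γ x i j k) (hh : ∀ i j, Smooth fun x => h x i j)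
    (hg : ∀ i j, Smooth fun x => hinv x i j) (s : ℝ) (v : Tot n) :
    ContDiff ℝ (⊤ : ℕ∞) fun z => JL Γ h hinv s z v := by
  have h1 : ∀ k, ContDiff ℝ (⊤ : ℕ∞) fun z => (JL Γ h hinv s z v).1 k := by
    intro k
    simp only [JL_fst, vcvstar]
    refine ContDiff.sum fun j _ => ContDiff.mul ?_ ?_
    · exact contDiff_const.mul ((hg j k).comp contDiff_fst)
    · exact contDiff_const.sub (ContDiff.sum fun i _ => contDiff_const.mul (contDiff_cstar hΓ i j))
  refine ContDiff.prodMk (contDiff_pi.2 h1) (contDiff_pi.2 fun l => ?_)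
  change ContDiff ℝ (⊤ : ℕ∞) fun z => (JL Γ h hinv s z v).2 l
  simp only [JL_snd]
  refine ContDiff.add (ContDiff.sum fun i _ => ?_) (ContDiff.sum fun k _ => ?_)
  · exact ((hh i l).comp contDiff_fst).mul contDiff_const
  · exact (contDiff_cstar hΓ k l).mul (h1 k)

theorem differentiable_Jc (hΓ : ∀ i j k, Smooth fun x => Γ x i j k)
    (hh : ∀ i j, Smooth fun x => h x i j) (hg : ∀ i j, Smooth fun x => hinv x i j) (s : ℝ) :
    Differentiable ℝ (Jc Γ h hinv s) :=
  (contDiff_clm_apply_iff.2 fun v => contDiff_JL hΓ hh hg s v).differentiable (by simp)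

/-- The bilinear expression `S(u,v) = D(Ju) v - J (D(u) v)`, for an endomorphism `J` and a linear
family `D` of endomorphisms, standing for the derivative of an endomorphism field. -/
noncomputable def halfNij {E : Type*} [NormedAddCommGroup E] [NormedSpace ℝ E]
    (J : E →L[ℝ] E) (D : E →L[ℝ] E →L[ℝ] E) : E →ₗ[ℝ] E →ₗ[ℝ] E :=
  LinearMap.mk₂ ℝ (fun u v => D (J u) v - J (D u v))
    (by intros; simp; abel) (by intros; simp [smul_sub]) (by intros; simp; abel)
    (by intros; simp [smul_sub])

theorem halfNij_apply {E : Type*} [NormedAddCommGroup E] [NormedSpace ℝ E]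
    (J : E →L[ℝ] E) (D : E →L[ℝ] E →L[ℝ] E) (u v : E) :
    halfNij J D u v = D (J u) v - J (D u v) := rfl

/-- The Nijenhuis tensor is pointwise bilinear: all derivatives of `U` and `V` cancel. -/
theorem nijJ_eq {s : ℝ} (hJ : Differentiable ℝ (Jc Γ h hinv s)) {U V : Tot n → Tot n}
    (hU : Smooth U) (hV : Smooth V) (z : Tot n) :
    nijJ Γ h hinv s U V z =
      halfNij (Jc Γ h hinv s z) (fderiv ℝ (Jc Γ h hinv s) z) (U z) (V z)
      - halfNij (Jc Γ h hinv s z) (fderiv ℝ (Jc Γ h hinv s) z) (V z) (U z) := by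
  have key : ∀ W : Tot n → Tot n, Smooth W → ∀ w, fderiv ℝ (JVF Γ h hinv s W) z w =
      fderiv ℝ (Jc Γ h hinv s) z w (W z) + Jc Γ h hinv s z (fderiv ℝ W z w) := by
    intro W hW w
    have hWd : DifferentiableAt ℝ W z := (hW.differentiable (by simp)) z
    have e : JVF Γ h hinv s W = fun z => Jc Γ h hinv s z (W z) := rfl
    rw [e, ((hJ z).hasFDerivAt.clm_apply hWd.hasFDerivAt).fderiv]
    simp [add_comm]
  simp only [nijJ, lie, key U hU, key V hV, halfNij_apply, ← Jc_apply, JVF, map_add, map_sub]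
  abel

/-- Differentiating `J² = s` shows that `J` anticommutes with its derivative. -/
theorem fderiv_Jc_comp {s : ℝ} (hJ : Differentiable ℝ (Jc Γ h hinv s))
    (hsq : ∀ z v, JL Γ h hinv s z (JL Γ h hinv s z v) = s • v) (z w v : Tot n) :
    fderiv ℝ (Jc Γ h hinv s) z w (Jc Γ h hinv s z v)
      = - Jc Γ h hinv s z (fderiv ℝ (Jc Γ h hinv s) z w v) := by
  have hd := (hJ z).hasFDerivAt
  have h1 := hd.clm_apply (hd.clm_apply (hasFDerivAt_const v z))
  have e : (fun z => Jc Γ h hinv s z (Jc Γ h hinv s z v)) = fun _ => s • v :=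
    funext fun z => hsq z v
  rw [e] at h1
  have h2 := DFunLike.congr_fun (h1.unique (hasFDerivAt_const (s • v) z)) w
  simp at h2
  exact eq_neg_of_add_eq_zero_right h2

/-! ### The Nijenhuis tensor on the horizontal frame -/

theorem smooth_XHstar (hΓ : ∀ i j k, Smooth fun x => Γ x i j k) (i : Fin n) :
    Smooth (XHstar Γ i) :=
  ContDiff.prodMk contDiff_const (contDiff_pi.2 fun l => contDiff_cstar hΓ i l)

theorem vcvstar_XHstar (z : Tot n) (i l : Fin n) : vcvstar Γ z (XHstar Γ i z) l = 0 := by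
  simp [vcvstar, XHstar, Pi.single_apply]

/-- `J̃_s X_i^H = h_{ik} ∂/∂y_k`. -/
theorem JVF_XHstar (s : ℝ) (i : Fin n) :
    JVF Γ h hinv s (XHstar Γ i) = fun z => ((0 : Fin n → ℝ), fun k => h z.1 i k) := by
  funext z
  have h1 : (JL Γ h hinv s z (XHstar Γ i z)).1 = 0 := by
    funext k
    simp [JL_fst, vcvstar_XHstar]
  refine Prod.ext h1 (funext fun l => ?_)
  change (JL Γ h hinv s z (XHstar Γ i z)).2 l = _
  rw [JL_snd, h1]
  simp [XHstar, Pi.single_apply]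

theorem fderiv_comp_fst {f : Pt n → ℝ} (hf : Smooth f) (z w : Tot n) :
    fderiv ℝ (fun z : Tot n => f z.1) z w = fderiv ℝ f z.1 w.1 := by
  have h1 : HasFDerivAt f (fderiv ℝ f z.1) z.1 := ((hf.differentiable (by simp)) z.1).hasFDerivAt
  have h2 := h1.comp z (hasFDerivAt_fst (𝕜 := ℝ) (p := z))
  have h3 : fderiv ℝ (fun z : Tot n => f z.1) z = _ := h2.fderiv
  rw [h3]
  rfl

theorem fderiv_cstar (hΓ : ∀ i j k, Smooth fun x => Γ x i j k) (i l : Fin n) (z w : Tot n) :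
    fderiv ℝ (fun z : Tot n => cstar Γ z i l) z w
      = ∑ k, (w.2 k * Γ z.1 i l k + z.2 k * fderiv ℝ (fun x => Γ x i l k) z.1 w.1) := by
  have hs : ∀ k, HasFDerivAt (fun z : Tot n => z.2 k)
      ((ContinuousLinearMap.proj k).comp (ContinuousLinearMap.snd ℝ (Fin n → ℝ) (Fin n → ℝ))) z :=
    fun k => ContinuousLinearMap.hasFDerivAt
      ((ContinuousLinearMap.proj k).comp (ContinuousLinearMap.snd ℝ (Fin n → ℝ) (Fin n → ℝ)))
  have hG : ∀ k, HasFDerivAt (fun z : Tot n => Γ z.1 i l k)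
      (fderiv ℝ (fun z : Tot n => Γ z.1 i l k) z) z := fun k =>
    ((((hΓ i l k).comp contDiff_fst : ContDiff ℝ (⊤ : ℕ∞) fun z : Tot n => Γ z.1 i l k)).differentiable
      (by simp) z).hasFDerivAt
  have hsum := HasFDerivAt.fun_sum (u := Finset.univ) fun k _ => (hs k).mul (hG k)
  have h3 : fderiv ℝ (fun z : Tot n => cstar Γ z i l) z = _ := hsum.fderiv
  rw [h3, _root_.sum_apply]
  refine Finset.sum_congr rfl fun k _ => ?_
  simp [fderiv_comp_fst (hΓ i l k)]
  ring

/-- The derivative of a field `z ↦ (c, f z)` whose first component is constant. -/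
theorem fderiv_mk_const (c : Fin n → ℝ) {f : Tot n → Fin n → ℝ}
    (hf : ∀ l, ContDiff ℝ (⊤ : ℕ∞) fun z => f z l) (z w : Tot n) :
    fderiv ℝ (fun z : Tot n => (c, f z)) z w = (0, fun l => fderiv ℝ (fun z => f z l) z w) := by
  have h1 : HasFDerivAt f (ContinuousLinearMap.pi fun l => fderiv ℝ (fun z => f z l) z) z :=
    hasFDerivAt_pi.2 fun l => (((hf l).differentiable (by simp)) z).hasFDerivAt
  have h2 := (hasFDerivAt_const c z).prodMk h1
  rw [h2.fderiv]
  rfl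

theorem fderiv_XHstar (hΓ : ∀ i j k, Smooth fun x => Γ x i j k) (i : Fin n) (z w : Tot n) :
    fderiv ℝ (XHstar Γ i) z w
      = (0, fun l => ∑ k, (w.2 k * Γ z.1 i l k
          + z.2 k * fderiv ℝ (fun x => Γ x i l k) z.1 w.1)) := by
  have e : XHstar Γ i = fun z : Tot n => (Pi.single i 1, fun l => cstar Γ z i l) := rfl
  rw [e, fderiv_mk_const _ fun l => contDiff_cstar hΓ i l]
  simp only [fderiv_cstar hΓ]

theorem fderiv_vert (hh : ∀ i j, Smooth fun x => h x i j) (i : Fin n) (z w : Tot n) :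
    fderiv ℝ (fun z : Tot n => ((0 : Fin n → ℝ), fun k => h z.1 i k)) z w
      = (0, fun l => fderiv ℝ (fun x => h x i l) z.1 w.1) := by
  have hc : ∀ l, ContDiff ℝ (⊤ : ℕ∞) fun z : Tot n => h z.1 i l :=
    fun l => (hh i l).comp contDiff_fst
  rw [fderiv_mk_const _ hc]
  simp only [fderiv_comp_fst (hh i _)]

/-- `[X_i^H, X_j^H] = y_m R^m_{ijl} ∂/∂y_l`, which vanishes when `∇` is flat. -/
theorem lie_XHstar (hΓ : ∀ i j k, Smooth fun x => Γ x i j k)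
    (hR : ∀ x i j k l, curv Γ x i j k l = 0) (i j : Fin n) (z : Tot n) :
    lie (XHstar Γ i) (XHstar Γ j) z = 0 := by
  simp only [lie, fderiv_XHstar hΓ]
  refine Prod.ext (by simp) (funext fun l => ?_)
  have e : ∑ m, z.2 m * curv Γ z.1 i j l m = 0 := by simp [hR]
  have swap : ∀ i j : Fin n, ∑ m, z.2 m * ∑ r, Γ z.1 j l r * Γ z.1 i r m
      = ∑ k, (∑ m, z.2 m * Γ z.1 i k m) * Γ z.1 j l k := by
    intro i j
    simp only [Finset.mul_sum, Finset.sum_mul]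
    rw [Finset.sum_comm]
    exact Finset.sum_congr rfl fun _ _ => Finset.sum_congr rfl fun _ _ => by ring
  simp only [curv, mul_sub, mul_add, Finset.sum_add_distrib, Finset.sum_sub_distrib, swap, pd] at e
  simp only [XHstar, cstar, Prod.snd_sub, Pi.sub_apply, Finset.sum_add_distrib, Prod.snd_zero,
    Pi.zero_apply]
  linarith

/-- The Nijenhuis tensor vanishes on the horizontal frame: `h2` below is the identity `d^∇ h = 0`
read off from the vertical components of the mixed brackets. -/
theorem nijJ_XHstar (hΓ : ∀ i j k, Smooth fun x => Γ x i j k)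
    (hh : ∀ i j, Smooth fun x => h x i j)
    (hd : ∀ x i j k, dnabla Γ h x i j k = 0)
    (hR : ∀ x i j k l, curv Γ x i j k l = 0) (s : ℝ) (i j : Fin n) (z : Tot n) :
    nijJ Γ h hinv s (XHstar Γ i) (XHstar Γ j) z = 0 := by
  simp only [nijJ, lie_XHstar hΓ hR, JVF_XHstar, map_zero, add_zero]
  have h1 : lie (fun z : Tot n => ((0 : Fin n → ℝ), fun k => h z.1 i k))
      (fun z : Tot n => ((0 : Fin n → ℝ), fun k => h z.1 j k)) z = 0 := by
    simp only [lie, fderiv_vert hh]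
    refine Prod.ext (by simp) (funext fun l => by simp)
  have h2 : lie (fun z : Tot n => ((0 : Fin n → ℝ), fun k => h z.1 i k)) (XHstar Γ j) z
      + lie (XHstar Γ i) (fun z : Tot n => ((0 : Fin n → ℝ), fun k => h z.1 j k)) z = 0 := by
    simp only [lie, fderiv_vert hh, fderiv_XHstar hΓ]
    refine Prod.ext (by simp) (funext fun l => ?_)
    have e := hd z.1 i j l
    have comm : ∀ i j : Fin n, ∑ r, Γ z.1 j l r * h z.1 i r = ∑ r, h z.1 i r * Γ z.1 j l r :=
      fun i j => Finset.sum_congr rfl fun _ _ => mul_comm _ _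
    simp only [dnabla, covh, sub_mul, Finset.sum_sub_distrib, pd, comm] at e
    simp [XHstar]
    linarith
  rw [h1, zero_sub, ← neg_add', ← map_add, h2, map_zero, neg_zero]

/-- The fields `X_i^H` and `J̃_s X_i^H` span the tangent space of `T*M` at every point. -/
theorem span_frame (hleft : ∀ x i j, ∑ k, hinv x i k * h x k j = if i = j then (1 : ℝ) else 0)
    (s : ℝ) (z : Tot n) :
    Submodule.span ℝ (Set.range (Sum.elim (fun i => XHstar Γ i z)
      fun i => (Jc Γ h hinv s z : Tot n →ₗ[ℝ] Tot n) (XHstar Γ i z))) = ⊤ := by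
  have hJX : ∀ i, (Jc Γ h hinv s z : Tot n →ₗ[ℝ] Tot n) (XHstar Γ i z)
      = ((0 : Fin n → ℝ), fun k => h z.1 i k) := fun i =>
    congrFun (JVF_XHstar (Γ := Γ) (h := h) (hinv := hinv) s i) z
  rw [eq_top_iff]
  intro u _
  have hu : u = ∑ i, u.1 i • XHstar Γ i z
      + ∑ i, (∑ l, hinv z.1 l i * vcvstar Γ z u l) •
        ((0 : Fin n → ℝ), fun k => h z.1 i k) := by
    refine Prod.ext (funext fun k => ?_) (funext fun l => ?_)
    · simp [XHstar, Prod.fst_sum, Finset.sum_apply, Pi.single_apply]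
    · have e := sum_delta (hleft z.1) (vcvstar Γ z u) l
      simp only [mul_comm (h z.1 _ l)] at e
      simp only [Prod.snd_add, Prod.snd_sum, Prod.smul_snd, Pi.add_apply, Finset.sum_apply,
        Pi.smul_apply, smul_eq_mul, e]
      simp [XHstar, vcvstar]
  rw [hu]
  refine Submodule.add_mem _ (Submodule.sum_mem _ fun i _ => Submodule.smul_mem _ _ ?_)
    (Submodule.sum_mem _ fun i _ => Submodule.smul_mem _ _ ?_)
  · exact Submodule.subset_span ⟨Sum.inl i, rfl⟩
  · exact Submodule.subset_span ⟨Sum.inr i, hJX i⟩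

theorem nijJ_eq_zero (hΓ : ∀ i j k, Smooth fun x => Γ x i j k)
    (hh : ∀ i j, Smooth fun x => h x i j) (hg : ∀ i j, Smooth fun x => hinv x i j)
    (hleft : ∀ x i j, ∑ k, hinv x i k * h x k j = if i = j then (1 : ℝ) else 0)
    (hright : ∀ x i j, ∑ k, h x i k * hinv x k j = if i = j then (1 : ℝ) else 0)
    (hd : ∀ x i j k, dnabla Γ h x i j k = 0) (hR : ∀ x i j k l, curv Γ x i j k l = 0) (s : ℝ)
    (U V : Tot n → Tot n) (hU : Smooth U) (hV : Smooth V) (z : Tot n) :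
    nijJ Γ h hinv s U V z = 0 := by
  have hJd := differentiable_Jc hΓ hh hg s
  have hsq := JL_sq (Γ := Γ) hleft hright s
  have hcomp := fderiv_Jc_comp hJd hsq z
  have hsq' : ∀ v, Jc Γ h hinv s z (Jc Γ h hinv s z v) = s • v := hsq z
  have hn := fun i j => nijJ_eq hJd (smooth_XHstar hΓ i) (smooth_XHstar hΓ j) z
  rw [nijJ_eq hJd hU hV]
  generalize fderiv ℝ (Jc Γ h hinv s) z = D at *
  have hT : halfNij (Jc Γ h hinv s z) D - (halfNij (Jc Γ h hinv s z) D).flip = 0 := by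
    refine antisymm_eq_zero (Jc Γ h hinv s z : Tot n →ₗ[ℝ] Tot n) _ ?_ ?_
      (fun i => XHstar Γ i z) (span_frame hleft s z) ?_
    · intro u v
      simp
    · intro u v
      simp only [LinearMap.sub_apply, LinearMap.flip_apply, halfNij_apply,
        ContinuousLinearMap.coe_coe, hsq', hcomp, map_sub, map_neg, map_smul,
        _root_.smul_apply]
      abel
    · intro i j
      simp only [LinearMap.sub_apply, LinearMap.flip_apply]
      rw [← hn, nijJ_XHstar hΓ hh hd hR]
  exact DFunLike.congr_fun (DFunLike.congr_fun hT (U z)) (V z)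

/-- for a pseudo-Riemannian manifold `(M,h)` with an affine connection `∇`,
`(T*M, J̃^∇_-, h̃)` is a Norden manifold and `(T*M, J̃^∇_+, h̃)` is an almost Para-Norden
manifold; moreover, if `(M, h, ∇)` is a flat quasi-statistical manifold then `J̃^∇_-` and
`J̃^∇_+` are integrable (their Nijenhuis tensors vanish), so that `(T*M, J̃^∇_-, h̃)` is a
complex Norden manifold and `(T*M, J̃^∇_+, h̃)` is a Para-Norden manifold. -/
theorem statement19 {n : ℕ} (Γ : Pt n → Fin n → Fin n → Fin n → ℝ)
    (h hinv : Pt n → Fin n → Fin n → ℝ)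
    (hsmoothΓ : ∀ i j k, Smooth fun x => Γ x i j k)
    (hsmoothh : ∀ i j, Smooth fun x => h x i j)
    (hsmoothhinv : ∀ i j, Smooth fun x => hinv x i j)
    (hsym : ∀ x i j, h x i j = h x j i)
    (hleft : ∀ x i j, ∑ k, hinv x i k * h x k j = if i = j then (1 : ℝ) else 0)
    (hright : ∀ x i j, ∑ k, h x i k * hinv x k j = if i = j then (1 : ℝ) else 0) :
    -- `(T*M, J̃^∇_-, h̃)` is a Norden manifold:
    ((∀ (z v : Tot n), JL Γ h hinv (-1) z (JL Γ h hinv (-1) z v) = -v) ∧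
     (∀ z u v : Tot n, pwPt Γ z (JL Γ h hinv (-1) z u) v = pwPt Γ z u (JL Γ h hinv (-1) z v))) ∧
    -- `(T*M, J̃^∇_+, h̃)` is an almost Para-Norden manifold:
    ((∀ (z v : Tot n), JL Γ h hinv 1 z (JL Γ h hinv 1 z v) = v) ∧
     (∀ z : Tot n,
        Module.finrank ℝ (Module.End.eigenspace (JL Γ h hinv 1 z) 1) = n ∧
        Module.finrank ℝ (Module.End.eigenspace (JL Γ h hinv 1 z) (-1)) = n) ∧
     (∀ z u v : Tot n, pwPt Γ z (JL Γ h hinv 1 z u) v = pwPt Γ z u (JL Γ h hinv 1 z v))) ∧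
    -- flat quasi-statistical implies integrability of both structures:
    (((∀ x i j k, dnabla Γ h x i j k = 0) ∧ (∀ x i j k l, curv Γ x i j k l = 0)) →
      (∀ U V : Tot n → Tot n, Smooth U → Smooth V → ∀ z,
          nijJ Γ h hinv (-1) U V z = 0) ∧
      (∀ U V : Tot n → Tot n, Smooth U → Smooth V → ∀ z,
          nijJ Γ h hinv 1 U V z = 0)) := by
  have gsym := hinv_symm hsym hleft
  refine ⟨⟨fun z v => ?_, fun z u v => pwPt_JL hsym gsym _ z u v⟩,
    ⟨fun z v => ?_, fun z => ⟨?_, ?_⟩, fun z u v => pwPt_JL hsym gsym _ z u v⟩, ?_⟩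
  · rw [JL_sq hleft hright, neg_one_smul]
  · rw [JL_sq hleft hright, one_smul]
  · exact finrank_eigenspace hright 1 (by norm_num) z
  · exact finrank_eigenspace hright (-1) (by norm_num) z
  · rintro ⟨hd, hR⟩
    exact ⟨nijJ_eq_zero hsmoothΓ hsmoothh hsmoothhinv hleft hright hd hR (-1),
      nijJ_eq_zero hsmoothΓ hsmoothh hsmoothhinv hleft hright hd hR 1⟩

end GQSCoord
end
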